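/- arXiv:1908.11172 — 5 statements merged into one kernel-verified Lean document; each statement's English description precedes it below -/
import Mathlib

section
/- Let d ≥ 2 and let γ : ℝ → ℝ^d be a closed curve of length L parametrized by arc length whose derivative γ' is Lipschitz, and set K := ‖γ''‖_{L^∞}. Then for all real numbers s ≤ t, 0 ≤ (t−s)² − |γ(t) − γ(s)|² ≤ (K²/2)(t−s)⁴. -/
open MeasureTheory Real Filter
open scoped Classical ENNReal NNReal

/-- intrinsic distance of parameters on the circle of length `L`. -/
noncomputable def iDist (L s t : ℝ) : ℝ := ⨅ k : ℤ, |t - s - (k : ℝ) * L|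

/-- O'Hara's `(α,q)`-energy of a closed curve `γ` of length `L`. -/
noncomputable def oharaE (d : ℕ) (α q L : ℝ) (γ : ℝ → EuclideanSpace ℝ (Fin d)) : ℝ :=
  (1 / α) * L ^ (α * q - 2) *
    ∫ t in Set.Ioc (0 : ℝ) L, ∫ s in Set.Ioc (0 : ℝ) L,
      (‖γ t - γ s‖ ^ (-α) - iDist L s t ^ (-α)) ^ q

/-- length of the `k`-th edge of the inscribed polygon with vertices `γ (b k)`. -/
noncomputable def edgeLen (d : ℕ) (γ : ℝ → EuclideanSpace ℝ (Fin d)) (b : ℤ → ℝ) (k : ℤ) : ℝ :=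
  ‖γ (b (k + 1)) - γ (b k)‖

/-- total length of the inscribed polygon with `n` edges. -/
noncomputable def polyLen (d : ℕ) (γ : ℝ → EuclideanSpace ℝ (Fin d)) (b : ℤ → ℝ) (n : ℕ) : ℝ :=
  ∑ k ∈ Finset.Icc (1 : ℤ) (n : ℤ), edgeLen d γ b k

/-- arc-length parameter `a i` of the `i`-th vertex of the inscribed polygon (`a 1 = 0`). -/
noncomputable def vParam (d : ℕ) (γ : ℝ → EuclideanSpace ℝ (Fin d)) (b : ℤ → ℝ) (i : ℤ) : ℝ :=
  ∑ k ∈ Finset.Ico (1 : ℤ) i, edgeLen d γ b k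

/-- discrete O'Hara energy of the inscribed polygon with vertices `γ (b k)`, `k = 1, …, n`. -/
noncomputable def discE (d : ℕ) (α q : ℝ) (γ : ℝ → EuclideanSpace ℝ (Fin d)) (b : ℤ → ℝ)
    (n : ℕ) : ℝ :=
  (1 / α) * polyLen d γ b n ^ (α * q - 2) *
    ∑ i ∈ Finset.Icc (1 : ℤ) (n : ℤ), ∑ j ∈ Finset.Icc (1 : ℤ) (n : ℤ),
      (if i = j then 0 else
        (‖γ (b j) - γ (b i)‖ ^ (-α) -
            iDist (polyLen d γ b n) (vParam d γ b i) (vParam d γ b j) ^ (-α)) ^ q *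
          edgeLen d γ b i * edgeLen d γ b j)

/-- a `(c, cb)`-division of the closed curve `γ` of length `L` into `n` arcs. -/
def IsDivision (d : ℕ) (γ : ℝ → EuclideanSpace ℝ (Fin d)) (L c cb : ℝ) (n : ℕ)
    (b : ℤ → ℝ) : Prop :=
  StrictMono b ∧ (∀ k : ℤ, b (k + (n : ℤ)) = b k + L) ∧
    ∀ k : ℤ, c * L / n ≤ edgeLen d γ b k ∧ edgeLen d γ b k ≤ cb * L / n

theorem stmt3 (d : ℕ) (hd : 2 ≤ d) (L : ℝ) (hL : 0 < L)
    (γ : ℝ → EuclideanSpace ℝ (Fin d)) (K : ℝ≥0)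
    (hper : Function.Periodic γ L)
    (hdiff : Differentiable ℝ γ)
    (hspeed : ∀ s : ℝ, ‖deriv γ s‖ = 1)
    (hK : LipschitzWith K (deriv γ))
    (s t : ℝ) (hst : s ≤ t) :
    0 ≤ (t - s) ^ 2 - ‖γ t - γ s‖ ^ 2 ∧
      (t - s) ^ 2 - ‖γ t - γ s‖ ^ 2 ≤ (K : ℝ) ^ 2 / 2 * (t - s) ^ 4 := by
  have hup : ‖γ t - γ s‖ ≤ t - s := by
    have h := Convex.norm_image_sub_le_of_norm_deriv_le (𝕜 := ℝ) (f := γ) (s := Set.univ) (C := 1)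
      (x := s) (y := t) (fun x _ => hdiff x) (fun x _ => (hspeed x).le) convex_univ
      (Set.mem_univ _) (Set.mem_univ _)
    rw [Real.norm_eq_abs, abs_of_nonneg (by linarith)] at h
    linarith
  have hin : ∀ u : ℝ, 1 - (K : ℝ) ^ 2 / 2 * (u - s) ^ 2 ≤ inner ℝ (deriv γ u) (deriv γ s) := by
    intro u
    have h1 := hK.dist_le_mul u s
    rw [dist_eq_norm, Real.dist_eq] at h1
    have h2 : ‖deriv γ u - deriv γ s‖ ^ 2 ≤ ((K : ℝ) * |u - s|) ^ 2 :=
      pow_le_pow_left₀ (norm_nonneg _) h1 2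
    rw [norm_sub_sq_real, hspeed, hspeed, mul_pow, sq_abs] at h2
    linarith
  have hder : ∀ u : ℝ, HasDerivAt (fun u => inner ℝ (γ u - γ s) (deriv γ s) - (u - s)
      + (K : ℝ) ^ 2 / 6 * (u - s) ^ 3)
      (inner ℝ (deriv γ u) (deriv γ s) - 1 + (K : ℝ) ^ 2 / 6 * (3 * (u - s) ^ 2)) u := by
    intro u
    have h1 := (((hdiff u).hasDerivAt.sub_const (γ s)).inner ℝ (hasDerivAt_const u (deriv γ s)))
    have h2 := (hasDerivAt_id u).sub_const s
    have h3 := (h1.sub h2).add ((h2.pow 3).const_mul ((K : ℝ) ^ 2 / 6))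
    refine h3.congr_deriv ?_
    simp
  have hmono := monotone_of_deriv_nonneg (fun u => (hder u).differentiableAt) (fun u => by
    rw [(hder u).deriv]
    have := hin u
    linarith)
  have h0 := hmono hst
  simp only [sub_self, inner_zero_left] at h0
  have hcs := real_inner_le_norm (γ t - γ s) (deriv γ s)
  rw [hspeed, mul_one] at hcs
  have ha := norm_nonneg (γ t - γ s)
  set a := ‖γ t - γ s‖
  have hh : 0 ≤ t - s := by linarith
  set h := t - s
  have hc : h - a ≤ (K : ℝ) ^ 2 / 6 * h ^ 3 := by norm_num at h0; linarith
  have hK4 : 0 ≤ (K : ℝ) ^ 2 * h ^ 4 := by positivity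
  constructor
  · nlinarith
  · have h5 : (h - a) * (h + a) ≤ (K : ℝ) ^ 2 / 6 * h ^ 3 * (2 * h) :=
      mul_le_mul hc (by linarith) (by linarith) (by positivity)
    nlinarith
end

section
/- Let d ≥ 2, α ∈ (0,∞) and q ∈ [1,∞), and let γ : ℝ → ℝ^d be a closed curve of length L parametrized by arc length. Then for all real numbers s < t, (t−s) − |γ(t) − γ(s)| ≤ (1/2)(t−s)^{α+1−2/q} ( ∫_s^t ∫_s^t |γ'(v) − γ'(u)|^{2q} / |v−u|^{αq} du dv )^{1/q}, where the right-hand side may equal +∞. -/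
open MeasureTheory Real Filter
open scoped Classical ENNReal NNReal

theorem aux_ftc {d : ℕ} {γ : ℝ → EuclideanSpace ℝ (Fin d)}
    {M : ℝ≥0} (hlip : LipschitzWith M γ) {s t : ℝ} (hst : s < t)
    (w : EuclideanSpace ℝ (Fin d)) :
    ∫ x in Set.Ioc s t, inner ℝ w (deriv γ x) = inner ℝ w (γ t - γ s) := by
  have h1 : LipschitzWith (‖innerSL ℝ w‖₊ * M) (fun x => inner ℝ w (γ x)) :=
    (innerSL ℝ w).lipschitz.comp hlip
  have h2 := ((h1.lipschitzOnWith (s := Set.uIcc s t)).absolutelyContinuousOnInterval).integral_deriv_eq_sub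
  rw [intervalIntegral.integral_of_le hst.le] at h2
  rw [inner_sub_right, ← h2]
  apply integral_congr_ae
  apply ae_restrict_of_ae
  filter_upwards [hlip.ae_differentiableAt_real] with x hx
  have := ((innerSL ℝ w).hasFDerivAt.comp_hasDerivAt x hx.hasDerivAt).deriv
  exact this.symm

theorem aux_sq {d : ℕ} {γ : ℝ → EuclideanSpace ℝ (Fin d)}
    {M : ℝ≥0} (hlip : LipschitzWith M γ)
    (hspeed : ∀ᵐ s : ℝ ∂volume, ‖deriv γ s‖ = 1) {s t : ℝ} (hst : s < t) :
    ∫⁻ v in Set.Ioc s t, ∫⁻ u in Set.Ioc s t, ENNReal.ofReal (‖deriv γ v - deriv γ u‖ ^ 2)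
      = ENNReal.ofReal (2 * (t - s) ^ 2 - 2 * ‖γ t - γ s‖ ^ 2) := by
  have hm : Measurable (deriv γ) := measurable_deriv γ
  have hsp : ∀ᵐ x ∂(volume.restrict (Set.Ioc s t)), ‖deriv γ x‖ = 1 := ae_restrict_of_ae hspeed
  have hint : ∀ w : EuclideanSpace ℝ (Fin d),
      Integrable (fun u => inner ℝ w (deriv γ u)) (volume.restrict (Set.Ioc s t)) := by
    intro w
    refine Integrable.of_bound (C := ‖w‖) (by fun_prop) ?_
    filter_upwards [hsp] with x hx
    have := norm_inner_le_norm (𝕜 := ℝ) w (deriv γ x)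
    rwa [hx, mul_one] at this
  have hin : ∀ᵐ v ∂(volume.restrict (Set.Ioc s t)),
      ∫⁻ u in Set.Ioc s t, ENNReal.ofReal (‖deriv γ v - deriv γ u‖ ^ 2)
        = ENNReal.ofReal (2 * (t - s) - 2 * inner ℝ (γ t - γ s) (deriv γ v)) ∧
      0 ≤ 2 * (t - s) - 2 * inner ℝ (γ t - γ s) (deriv γ v) := by
    filter_upwards [hsp] with v hv
    have e : (fun u => ‖deriv γ v - deriv γ u‖ ^ 2) =ᵐ[volume.restrict (Set.Ioc s t)]
        fun u => 2 - 2 * inner ℝ (deriv γ v) (deriv γ u) := by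
      filter_upwards [hsp] with u hu
      rw [norm_sub_sq_real, hu, hv]; ring
    have hI : Integrable (fun u => 2 - 2 * inner ℝ (deriv γ v) (deriv γ u))
        (volume.restrict (Set.Ioc s t)) := (integrable_const _).sub ((hint _).const_mul 2)
    have hval : ∫ u in Set.Ioc s t, ‖deriv γ v - deriv γ u‖ ^ 2
        = 2 * (t - s) - 2 * inner ℝ (γ t - γ s) (deriv γ v) := by
      rw [integral_congr_ae e, integral_sub (integrable_const _) ((hint _).const_mul 2),
        integral_const_mul, aux_ftc hlip hst, real_inner_comm]
      simp [hst.le, mul_comm]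
    rw [← hval]
    refine ⟨?_, integral_nonneg fun u => by positivity⟩
    rw [ofReal_integral_eq_lintegral_ofReal (hI.congr e.symm)
      (Eventually.of_forall fun u => by positivity)]
  have hI2 : Integrable (fun v => 2 * (t - s) - 2 * inner ℝ (γ t - γ s) (deriv γ v))
      (volume.restrict (Set.Ioc s t)) := (integrable_const _).sub ((hint _).const_mul 2)
  rw [lintegral_congr_ae (hin.mono fun v h => h.1), ← ofReal_integral_eq_lintegral_ofReal
    hI2 (hin.mono fun v h => h.2),
    integral_sub (integrable_const _) ((hint _).const_mul 2),
        integral_const_mul, integral_const_mul, aux_ftc hlip hst, real_inner_self_eq_norm_sq]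
  congr 1
  simp [hst.le]
  ring

theorem aux_holder {d : ℕ} {g : ℝ → EuclideanSpace ℝ (Fin d)} (hg : Measurable g)
    {q : ℝ} (hq : 1 ≤ q) {s t : ℝ} (hst : s < t) :
    ∫⁻ v in Set.Ioc s t, ∫⁻ u in Set.Ioc s t, ENNReal.ofReal (‖g v - g u‖ ^ 2)
      ≤ (∫⁻ v in Set.Ioc s t, ∫⁻ u in Set.Ioc s t, ENNReal.ofReal (‖g v - g u‖ ^ (2 * q))) ^ (1 / q)
        * ENNReal.ofReal ((t - s) ^ (2 - 2 / q)) := by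
  set μ := volume.restrict (Set.Ioc s t) with hμ
  have hT : 0 < t - s := sub_pos.2 hst
  have hm : Measurable (fun p : ℝ × ℝ => ‖g p.1 - g p.2‖ ^ 2) := by fun_prop
  have hm2 : Measurable (fun p : ℝ × ℝ => ‖g p.1 - g p.2‖ ^ (2 * q)) := by fun_prop
  have key := eLpNorm'_le_eLpNorm'_mul_rpow_measure_univ (μ := μ.prod μ) (p := 1) (q := q)
    one_pos hq hm.aestronglyMeasurable
  have hu : (μ.prod μ) Set.univ ^ (1 / 1 - 1 / q) = ENNReal.ofReal ((t - s) ^ (2 - 2 / q)) := by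
    rw [← Set.univ_prod_univ, Measure.prod_prod, hμ, Measure.restrict_apply_univ, Real.volume_Ioc,
      ← ENNReal.ofReal_mul hT.le, ENNReal.ofReal_rpow_of_pos (by positivity), ← pow_two,
      ← Real.rpow_natCast, ← Real.rpow_mul hT.le]
    congr 2
    push_cast
    ring
  rw [hu] at key
  simp only [eLpNorm'] at key
  rw [← lintegral_prod _ (hm.ennreal_ofReal.aemeasurable),
    ← lintegral_prod _ (hm2.ennreal_ofReal.aemeasurable)]
  convert key using 2
  · simp only [div_one, ENNReal.rpow_one]
    refine lintegral_congr fun p => ?_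
    rw [Real.enorm_eq_ofReal (by positivity)]
  · congr 1
    refine lintegral_congr fun p => ?_
    rw [Real.enorm_eq_ofReal (by positivity), ENNReal.ofReal_rpow_of_nonneg (by positivity) (by linarith),
      Real.rpow_mul (by positivity)]
    norm_num

theorem stmt4 (d : ℕ) (hd : 2 ≤ d) (α q : ℝ) (hα : 0 < α) (hq : 1 ≤ q)
    (L : ℝ) (hL : 0 < L) (γ : ℝ → EuclideanSpace ℝ (Fin d))
    (hper : Function.Periodic γ L)
    (hlip : ∃ M : ℝ≥0, LipschitzWith M γ)
    (hspeed : ∀ᵐ s : ℝ ∂volume, ‖deriv γ s‖ = 1)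
    (s t : ℝ) (hst : s < t) :
    ENNReal.ofReal ((t - s) - ‖γ t - γ s‖) ≤
      ENNReal.ofReal ((1 / 2) * (t - s) ^ (α + 1 - 2 / q)) *
        (∫⁻ v in Set.Ioc s t, ∫⁻ u in Set.Ioc s t,
            ENNReal.ofReal (‖deriv γ v - deriv γ u‖ ^ (2 * q) / |v - u| ^ (α * q))) ^
          (1 / q) := by
  obtain ⟨M, hM⟩ := hlip
  have hT : 0 < t - s := sub_pos.2 hst
  have hm : Measurable (deriv γ) := measurable_deriv γ
  have hq0 : 0 < q := by linarith
  have h1 := aux_sq hM hspeed hst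
  have h2 := aux_holder hm hq hst
  rw [h1] at h2
  set J := ∫⁻ v in Set.Ioc s t, ∫⁻ u in Set.Ioc s t,
            ENNReal.ofReal (‖deriv γ v - deriv γ u‖ ^ (2 * q) / |v - u| ^ (α * q)) with hJ
  have h3 : ∫⁻ v in Set.Ioc s t, ∫⁻ u in Set.Ioc s t,
      ENNReal.ofReal (‖deriv γ v - deriv γ u‖ ^ (2 * q))
      ≤ ENNReal.ofReal ((t - s) ^ (α * q)) * J := by
    rw [hJ, ← lintegral_const_mul' _ _ ENNReal.ofReal_ne_top]
    refine setLIntegral_mono' measurableSet_Ioc fun v hv => ?_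
    rw [← lintegral_const_mul' _ _ ENNReal.ofReal_ne_top]
    refine setLIntegral_mono' measurableSet_Ioc fun u hu => ?_
    rw [← ENNReal.ofReal_mul (by positivity)]
    apply ENNReal.ofReal_le_ofReal
    by_cases huv : v = u
    · subst huv
      rw [sub_self, norm_zero, Real.zero_rpow (by positivity)]
      simp
    · have hpos : 0 < |v - u| := abs_pos.2 (sub_ne_zero.2 huv)
      have hle : |v - u| ≤ t - s := by
        rw [abs_le]; constructor <;> linarith [hv.1, hv.2, hu.1, hu.2]
      have hp := Real.rpow_le_rpow hpos.le hle (by positivity : 0 ≤ α * q)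
      have hp' : 0 < |v - u| ^ (α * q) := by positivity
      rw [mul_div_assoc', le_div_iff₀ hp', mul_comm]
      exact mul_le_mul_of_nonneg_right hp (by positivity)
  have h4 := ENNReal.rpow_le_rpow h3 (by positivity : 0 ≤ 1 / q)
  rw [ENNReal.mul_rpow_of_nonneg _ _ (by positivity : 0 ≤ 1 / q),
    ENNReal.ofReal_rpow_of_pos (by positivity), ← Real.rpow_mul hT.le,
    show α * q * (1 / q) = α by field_simp] at h4
  by_cases hD : t - s < ‖γ t - γ s‖
  · rw [ENNReal.ofReal_of_nonpos (by linarith)]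
    exact zero_le
  push Not at hD
  have hD0 := norm_nonneg (γ t - γ s)
  set D := ‖γ t - γ s‖
  calc ENNReal.ofReal ((t - s) - D)
      ≤ ENNReal.ofReal (1 / (2 * (t - s)) * (2 * (t - s) ^ 2 - 2 * D ^ 2)) := by
        apply ENNReal.ofReal_le_ofReal
        rw [div_mul_eq_mul_div, le_div_iff₀ (by positivity)]
        nlinarith
    _ = ENNReal.ofReal (1 / (2 * (t - s))) * ENNReal.ofReal (2 * (t - s) ^ 2 - 2 * D ^ 2) :=
        ENNReal.ofReal_mul (by positivity)
    _ ≤ ENNReal.ofReal (1 / (2 * (t - s))) * (ENNReal.ofReal ((t - s) ^ α) * J ^ (1 / q)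
          * ENNReal.ofReal ((t - s) ^ (2 - 2 / q))) := by
        gcongr
        exact h2.trans (by gcongr)
    _ = (ENNReal.ofReal (1 / (2 * (t - s))) * ENNReal.ofReal ((t - s) ^ α)
          * ENNReal.ofReal ((t - s) ^ (2 - 2 / q))) * J ^ (1 / q) := by ring
    _ = _ := by
        rw [← ENNReal.ofReal_mul (by positivity), ← ENNReal.ofReal_mul (by positivity)]
        congr 2
        rw [show α + 1 - 2 / q = -1 + α + (2 - 2 / q) by ring, Real.rpow_add hT, Real.rpow_add hT,
          Real.rpow_neg_one]
        field_simp
end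

section
/- Let d ≥ 2 and let γ : ℝ → ℝ^d be a closed curve of length L parametrized by arc length whose derivative γ' is Lipschitz, and set K := ‖γ''‖_{L^∞}. Then for all real numbers s ≤ t: (i) for every α > 0, (t−s)^α − |γ(t) − γ(s)|^α ≤ (α/2 + 1)(K²/2)(t−s)^{α+2}; (ii) if moreover 0 < α ≤ 2, then (t−s)^α − |γ(t) − γ(s)|^α ≤ (K^α / 2^{α/2})(t−s)^{2α}. -/
open MeasureTheory Real Filter
open scoped Classical ENNReal NNReal

lemma aux_chord {d : ℕ} (γ : ℝ → EuclideanSpace ℝ (Fin d)) (K : ℝ≥0)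
    (hdiff : Differentiable ℝ γ)
    (hspeed : ∀ s : ℝ, ‖deriv γ s‖ = 1)
    (hK : LipschitzWith K (deriv γ)) (s t : ℝ) (hst : s < t) :
    ‖γ t - γ s‖ ≤ t - s ∧ (t - s) ^ 2 - ‖γ t - γ s‖ ^ 2 ≤ (K : ℝ) ^ 2 / 2 * (t - s) ^ 4 := by
  have h1 : ‖γ t - γ s‖ ≤ t - s := by
    have := Convex.norm_image_sub_le_of_norm_deriv_le (𝕜 := ℝ) (f := γ) (C := 1)
      (s := Set.univ) (x := s) (y := t) (fun x _ => hdiff x) (fun x _ => (hspeed x).le)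
      convex_univ trivial trivial
    rw [Real.norm_eq_abs, abs_of_pos (sub_pos.2 hst)] at this
    linarith
  refine ⟨h1, ?_⟩
  set e := deriv γ ((s + t) / 2) with he
  have hf : ∀ x, HasDerivAt (fun x => inner ℝ e (γ x)) (inner ℝ e (deriv γ x)) x := by
    intro x
    simpa using (hasDerivAt_const x e).inner ℝ (hdiff x).hasDerivAt
  obtain ⟨x, hx, hfx⟩ := exists_hasDerivAt_eq_slope (fun x => inner ℝ e (γ x))
    (fun x => inner ℝ e (deriv γ x)) hst
    (fun x _ => (hf x).continuousAt.continuousWithinAt) (fun x _ => hf x)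
  have hr : 0 < t - s := sub_pos.2 hst
  rw [eq_div_iff hr.ne'] at hfx
  simp only [← inner_sub_right] at hfx
  have hc : inner ℝ e (γ t - γ s) ≤ ‖γ t - γ s‖ := by
    have := real_inner_le_norm e (γ t - γ s)
    rw [he, hspeed, one_mul] at this
    exact this
  have hn : ‖e - deriv γ x‖ ≤ K * ((t - s) / 2) := by
    have := hK.dist_le_mul ((s + t) / 2) x
    rw [dist_eq_norm, Real.dist_eq] at this
    refine this.trans (mul_le_mul_of_nonneg_left ?_ K.2)
    rw [abs_le]; constructor <;> linarith [hx.1, hx.2]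
  have hsq : ‖e - deriv γ x‖ ^ 2 = 2 - 2 * inner ℝ e (deriv γ x) := by
    rw [norm_sub_sq_real, hspeed, he, hspeed]; ring
  have hb : ‖e - deriv γ x‖ ^ 2 ≤ (K * ((t - s) / 2)) ^ 2 :=
    pow_le_pow_left₀ (norm_nonneg _) hn 2
  have hin : 1 - (K : ℝ) ^ 2 * (t - s) ^ 2 / 8 ≤ inner ℝ e (deriv γ x) := by
    nlinarith
  have h2 : (t - s) - ‖γ t - γ s‖ ≤ (K : ℝ) ^ 2 * (t - s) ^ 3 / 8 := by
    have := mul_le_mul_of_nonneg_right hin hr.le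
    nlinarith
  have h0 := norm_nonneg (γ t - γ s)
  have h3 : 0 ≤ (K : ℝ) ^ 2 * (t - s) ^ 3 / 8 := by positivity
  have h4 : ((t - s) - ‖γ t - γ s‖) * ((t - s) + ‖γ t - γ s‖)
      ≤ ((K : ℝ) ^ 2 * (t - s) ^ 3 / 8) * (2 * (t - s)) :=
    mul_le_mul h2 (by linarith) (by linarith) h3
  have h5 : 0 ≤ (K : ℝ) ^ 2 * (t - s) ^ 4 := by positivity
  nlinarith

lemma aux_one {β u : ℝ} (hβ : 0 < β) (hu : 0 ≤ u) (hu1 : u ≤ 1) :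
    1 - u ^ β ≤ (β + 1) * (1 - u) := by
  rcases le_total β 1 with h | h
  · have : u ^ (1 : ℝ) ≤ u ^ β := Real.rpow_le_rpow_of_exponent_ge_of_imp hu hu1 h (by
      intro _ h0; exact absurd h0 one_ne_zero)
    rw [Real.rpow_one] at this
    nlinarith
  · have := one_add_mul_self_le_rpow_one_add (s := u - 1) (by linarith) h
    rw [add_sub_cancel] at this
    nlinarith

theorem stmt5 (d : ℕ) (hd : 2 ≤ d) (L : ℝ) (hL : 0 < L)
    (γ : ℝ → EuclideanSpace ℝ (Fin d)) (K : ℝ≥0)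
    (hper : Function.Periodic γ L)
    (hdiff : Differentiable ℝ γ)
    (hspeed : ∀ s : ℝ, ‖deriv γ s‖ = 1)
    (hK : LipschitzWith K (deriv γ))
    (α : ℝ) (hα : 0 < α) (s t : ℝ) (hst : s ≤ t) :
    ((t - s) ^ α - ‖γ t - γ s‖ ^ α ≤ (α / 2 + 1) * ((K : ℝ) ^ 2 / 2) * (t - s) ^ (α + 2)) ∧
      (α ≤ 2 →
        (t - s) ^ α - ‖γ t - γ s‖ ^ α ≤
          (K : ℝ) ^ α / (2 : ℝ) ^ (α / 2) * (t - s) ^ (2 * α)) := by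
  rcases hst.eq_or_lt with rfl | hlt
  · have h2 : α + 2 ≠ 0 := by linarith
    have h3 : 2 * α ≠ 0 := by linarith
    simp [Real.zero_rpow hα.ne', Real.zero_rpow h2]
    intro _
    positivity
  obtain ⟨hc, hsq⟩ := aux_chord γ K hdiff hspeed hK s t hlt
  have hr : 0 < t - s := sub_pos.2 hlt
  have hc0 := norm_nonneg (γ t - γ s)
  generalize ‖γ t - γ s‖ = c at *
  generalize t - s = r at *
  have hβ : 0 < α / 2 := by linarith
  have e2 : ∀ x : ℝ, 0 ≤ x → (x ^ 2) ^ (α / 2) = x ^ α := by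
    intro x hx
    rw [← Real.rpow_natCast, ← Real.rpow_mul hx]
    congr 1; push_cast; ring
  constructor
  · have hu1 : (c / r) ^ 2 ≤ 1 := by
      rw [div_pow, div_le_one (by positivity)]
      exact pow_le_pow_left₀ hc0 hc 2
    have h := aux_one hβ (sq_nonneg (c / r)) hu1
    rw [e2 _ (by positivity), Real.div_rpow hc0 hr.le] at h
    have hra : 0 < r ^ α := Real.rpow_pos_of_pos hr α
    have h1 : 1 - (c / r) ^ 2 ≤ (K : ℝ) ^ 2 / 2 * r ^ 2 := by
      rw [div_pow, sub_le_iff_le_add, ← sub_le_iff_le_add', le_div_iff₀ (by positivity)]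
      nlinarith
    have h2 : 1 - c ^ α / r ^ α ≤ (α / 2 + 1) * ((K : ℝ) ^ 2 / 2 * r ^ 2) :=
      h.trans (mul_le_mul_of_nonneg_left h1 (by linarith))
    have h3 := mul_le_mul_of_nonneg_right h2 hra.le
    rw [sub_mul, div_mul_cancel₀ _ hra.ne', one_mul] at h3
    rw [Real.rpow_add hr, Real.rpow_two]
    linarith
  · intro hα2
    have hd0 : 0 ≤ r ^ 2 - c ^ 2 := by nlinarith
    have h := Real.rpow_add_le_add_rpow hd0 (sq_nonneg c) hβ.le (by linarith : α / 2 ≤ 1)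
    rw [sub_add_cancel, e2 _ hr.le, e2 _ hc0] at h
    have h2 := Real.rpow_le_rpow hd0 hsq hβ.le
    have h3 : ((K : ℝ) ^ 2 / 2 * r ^ 4) ^ (α / 2)
        = (K : ℝ) ^ α / (2 : ℝ) ^ (α / 2) * r ^ (2 * α) := by
      rw [Real.mul_rpow (by positivity) (by positivity), Real.div_rpow (by positivity) (by norm_num),
        e2 _ K.coe_nonneg, show r ^ 4 = (r ^ 2) ^ 2 by ring, e2 _ (by positivity),
        Real.rpow_mul hr.le, Real.rpow_two]
    linarith
end

section
/- Let d ≥ 2, α ∈ (0,∞) and q ∈ [1,∞) satisfy 2 ≤ αq < 2q+1, and set σ := (αq−1)/(2q). Let γ : ℝ → ℝ^d be a 1-periodic, injective-on-[0,1) closed curve parametrized by arc length of class C¹ with ∫₀¹ ∫₀¹ |γ'(t) − γ'(s)|^{2q} / D(s,t)^{1+2qσ} ds dt < ∞ (i.e. γ ∈ W^{1+σ,2q}). Then there exists a sequence (p_n), where p_n is the arc-length parametrization of an equilateral closed polygon with n edges and total length 1, such that ‖p_n − γ‖_{L^∞} + ‖p_n' − γ'‖_{L^∞} → 0 and E_n^{α,q}(p_n)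 → E^{α,q}(γ) as n → ∞. -/
open MeasureTheory Real Filter
open scoped Classical ENNReal NNReal

noncomputable def xun {E : Type*} [NormedAddCommGroup E] [InnerProductSpace ℝ E] (x : E) : E :=
  ‖x‖⁻¹ • x

noncomputable def xav {E : Type*} [NormedAddCommGroup E] [InnerProductSpace ℝ E]
    (γ : ℝ → E) (n : ℕ) (k : ℤ) : E :=
  (n : ℝ) • (γ (((k : ℝ) + 1) / n) - γ ((k : ℝ) / n))

section
set_option linter.unusedSectionVars false
variable {E : Type*} [NormedAddCommGroup E] [InnerProductSpace ℝ E]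

lemma xun_norm {x : E} (hx : x ≠ 0) : ‖xun x‖ = 1 := by
  unfold xun
  rw [norm_smul, norm_inv, norm_norm, inv_mul_cancel₀ (norm_ne_zero_iff.2 hx)]

lemma xun_lip (x y : E) (hx : x ≠ 0) (hy : y ≠ 0) :
    ‖xun x - xun y‖ ≤ 2 * ‖x - y‖ / ‖y‖ := by
  have hx' : 0 < ‖x‖ := norm_pos_iff.2 hx
  have hy' : 0 < ‖y‖ := norm_pos_iff.2 hy
  have h1 : xun x - xun y = (‖x‖⁻¹ - ‖y‖⁻¹) • x + ‖y‖⁻¹ • (x - y) := by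
    unfold xun; rw [sub_smul, smul_sub]; abel
  rw [h1]
  refine (norm_add_le _ _).trans ?_
  rw [norm_smul, norm_smul, norm_inv, norm_norm, Real.norm_eq_abs]
  have h2 : |‖x‖⁻¹ - ‖y‖⁻¹| * ‖x‖ = |‖y‖ - ‖x‖| / ‖y‖ := by
    have : ‖x‖⁻¹ - ‖y‖⁻¹ = (‖y‖ - ‖x‖) / (‖x‖ * ‖y‖) := by field_simp
    rw [this, abs_div, abs_of_pos (mul_pos hx' hy')]; field_simp
  rw [h2]
  have h3 : |‖y‖ - ‖x‖| ≤ ‖x - y‖ := by rw [norm_sub_rev]; exact abs_norm_sub_norm_le _ _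
  have : |‖y‖ - ‖x‖| / ‖y‖ ≤ ‖x - y‖ / ‖y‖ := by gcongr
  calc _ ≤ ‖x - y‖ / ‖y‖ + ‖y‖⁻¹ * ‖x - y‖ := by gcongr
    _ = _ := by field_simp; ring

lemma xunif {T : ℝ → E} (hT : Continuous T) (hp : Function.Periodic T 1) :
    ∀ ε > 0, ∃ δ > 0, ∀ s t : ℝ, |s - t| < δ → ‖T s - T t‖ ≤ ε := by
  intro ε hε
  have h := (isCompact_Icc (a := (-1 : ℝ)) (b := 2)).uniformContinuousOn_of_continuous
    hT.continuousOn
  rw [Metric.uniformContinuousOn_iff] at h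
  obtain ⟨δ, hδ, h⟩ := h ε hε
  refine ⟨min δ 1, by positivity, fun s t hst => ?_⟩
  have e1 : T s = T (s - ⌊s⌋) := by
    have := hp.sub_zsmul_eq ⌊s⌋ (x := s); simpa using this.symm
  have e2 : T t = T (t - ⌊s⌋) := by
    have := hp.sub_zsmul_eq ⌊s⌋ (x := t); simpa using this.symm
  have a1 := Int.floor_le s
  have a2 := Int.lt_floor_add_one s
  have a3 := abs_lt.1 (hst.trans_le (min_le_right _ _))
  rw [e1, e2, ← dist_eq_norm]
  refine (h _ ?_ _ ?_ ?_).le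
  · constructor <;> linarith
  · constructor <;> linarith
  · rw [Real.dist_eq]; 
    have : s - ⌊s⌋ - (t - ⌊s⌋) = s - t := by ring
    rw [this]; exact hst.trans_le (min_le_left _ _)

lemma xinj {γ : ℝ → E} (hp : Function.Periodic γ 1) (hinj : Set.InjOn γ (Set.Ico (0 : ℝ) 1))
    {s t : ℝ} (h : γ s = γ t) : ∃ k : ℤ, s - t = k := by
  have e1 : γ s = γ (Int.fract s) := by
    have := hp.sub_zsmul_eq ⌊s⌋ (x := s); simpa using this.symm
  have e2 : γ t = γ (Int.fract t) := by
    have := hp.sub_zsmul_eq ⌊t⌋ (x := t); simpa using this.symm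
  rw [e1, e2] at h
  have := hinj ⟨Int.fract_nonneg _, Int.fract_lt_one _⟩ ⟨Int.fract_nonneg _, Int.fract_lt_one _⟩ h
  refine ⟨⌊s⌋ - ⌊t⌋, ?_⟩
  unfold Int.fract at this
  push_cast; linarith

/-- first order Taylor estimate -/
lemma xtaylor {γ T : ℝ → E} (hd : ∀ s, HasDerivAt γ (T s) s) (a b : ℝ) (v : E) (ε : ℝ) (hab : a ≤ b)
    (h : ∀ u ∈ Set.Icc a b, ‖T u - v‖ ≤ ε) : ‖γ b - γ a - (b - a) • v‖ ≤ ε * (b - a) := by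
  have := norm_image_sub_le_of_norm_deriv_le_segment' (f := fun u => γ u - u • v)
    (f' := fun u => T u - v) (a := a) (b := b) (C := ε)
    (fun x _ => ((hd x).sub (by simpa using (hasDerivAt_id x).smul_const v)).hasDerivWithinAt)
    (fun x hx => h x ⟨hx.1, hx.2.le⟩) b ⟨hab, le_rfl⟩
  convert this using 2
  rw [sub_smul]; abel

lemma xbilip {γ T : ℝ → E} (hd : ∀ s, HasDerivAt γ (T s) s) (hT : Continuous T)
    (hp : Function.Periodic γ 1) (hpT : Function.Periodic T 1) (hn : ∀ s, ‖T s‖ = 1)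
    (hinj : Set.InjOn γ (Set.Ico (0 : ℝ) 1)) :
    ∃ c > 0, ∀ s z : ℝ, 0 ≤ z → z ≤ 1 / 2 → c * z ≤ ‖γ (s + z) - γ s‖ := by
  obtain ⟨δ, hδ, hu⟩ := xunif hT hpT (1/2) (by norm_num)
  have hγc : Continuous γ := continuous_iff_continuousAt.2 fun s => (hd s).continuousAt
  set K : Set (ℝ × ℝ) := Set.Icc 0 1 ×ˢ Set.Icc (δ/2) (1/2) with hK
  have hKc : IsCompact K := isCompact_Icc.prod isCompact_Icc
  have hfar : ∃ m > 0, ∀ x ∈ K, m ≤ ‖γ (x.1 + x.2) - γ x.1‖ := by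
    by_cases hne : K.Nonempty
    · obtain ⟨x0, hx0, hmin⟩ := hKc.exists_isMinOn hne
        (f := fun x : ℝ × ℝ => ‖γ (x.1 + x.2) - γ x.1‖) (by fun_prop)
      refine ⟨_, ?_, fun x hx => hmin hx⟩
      rw [gt_iff_lt, norm_pos_iff, sub_ne_zero]
      intro h
      obtain ⟨k, hk⟩ := xinj hp hinj h
      have h1 := hx0.2.1
      have h2 := hx0.2.2
      have h3 : (0 : ℝ) < k := by linarith
      have h4 : (k : ℝ) < 1 := by linarith
      norm_cast at h3 h4
      omega
    · exact ⟨1, one_pos, fun x hx => (hne ⟨x, hx⟩).elim⟩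
  obtain ⟨m, hm, hfar⟩ := hfar
  refine ⟨min (1/2) m, by positivity, fun s z hz0 hz1 => ?_⟩
  by_cases hz : z < δ
  · have := xtaylor hd s (s + z) (T s) (1/2) (by linarith) (fun u hu' => hu _ _ (by
      rw [abs_lt]; constructor <;> linarith [hu'.1, hu'.2]))
    have h2 : ‖(s + z - s) • T s‖ = z := by
      rw [norm_smul, hn, Real.norm_eq_abs, add_sub_cancel_left, abs_of_nonneg hz0, mul_one]
    have h3 := norm_sub_norm_le ((s + z - s) • T s) (γ (s + z) - γ s)
    rw [h2, norm_sub_rev (_ • _)] at h3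
    have h4 : min (1/2) m * z ≤ 1/2 * z := by gcongr; exact min_le_left _ _
    linarith
  · push Not at hz
    have e1 : γ s = γ (Int.fract s) := by
      have := hp.sub_zsmul_eq ⌊s⌋ (x := s); simpa using this.symm
    have e2 : γ (s + z) = γ (Int.fract s + z) := by
      have := hp.sub_zsmul_eq ⌊s⌋ (x := s + z)
      rw [← this]; congr 1; simp only [Int.fract, zsmul_eq_mul]; ring
    rw [e1, e2]
    have := hfar (Int.fract s, z) ⟨⟨Int.fract_nonneg _, (Int.fract_lt_one _).le⟩, by
      constructor <;> linarith⟩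
    refine le_trans ?_ this
    calc min (1/2) m * z ≤ m * 1 := by gcongr; exact min_le_right _ _; linarith
      _ = m := mul_one _

lemma xav_close {γ T : ℝ → E} (hd : ∀ s, HasDerivAt γ (T s) s) (n : ℕ) (hn : 0 < n) (k : ℤ)
    (v : E) (ε : ℝ)
    (h : ∀ u ∈ Set.Icc ((k : ℝ) / n) (((k : ℝ) + 1) / n), ‖T u - v‖ ≤ ε) :
    ‖xav γ n k - v‖ ≤ ε := by
  have hn' : (0 : ℝ) < n := by exact_mod_cast hn
  have := xtaylor hd ((k : ℝ) / n) (((k : ℝ) + 1) / n) v ε (by gcongr; linarith) h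
  have e : ((k : ℝ) + 1) / n - (k : ℝ) / n = 1 / n := by ring
  rw [e] at this
  have e2 : xav γ n k - v = (n : ℝ) • (γ (((k : ℝ) + 1) / n) - γ ((k : ℝ) / n) - (1 / (n : ℝ)) • v) := by
    unfold xav
    rw [smul_sub _ _ ((1 / (n : ℝ)) • v), smul_smul]
    have : (n : ℝ) * (1 / n) = 1 := by field_simp
    rw [this, one_smul]
  rw [e2, norm_smul, Real.norm_eq_abs, abs_of_pos hn']
  calc _ ≤ (n : ℝ) * (ε * (1 / n)) := by gcongr
    _ = ε := by field_simp

lemma xav_unif {γ T : ℝ → E} (hd : ∀ s, HasDerivAt γ (T s) s) (hT : Continuous T)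
    (hpT : Function.Periodic T 1) : ∀ ε > 0, ∀ᶠ n : ℕ in atTop, ∀ k : ℤ,
      ∀ u ∈ Set.Icc ((k : ℝ) / n) (((k : ℝ) + 1) / n), ‖xav γ n k - T u‖ ≤ ε := by
  intro ε hε
  obtain ⟨δ, hδ, hu⟩ := xunif hT hpT ε hε
  obtain ⟨N, hN⟩ := exists_nat_gt (1 / δ)
  filter_upwards [eventually_gt_atTop N, eventually_gt_atTop 0] with n hn hn0 k u huI
  have hn' : (0 : ℝ) < n := by exact_mod_cast hn0
  have hnN : (N : ℝ) < n := by exact_mod_cast hn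
  have h1 : 1 / (n : ℝ) < δ := by
    rw [div_lt_iff₀ hn']; rw [div_lt_iff₀ hδ] at hN; nlinarith
  have e : ((k : ℝ) + 1) / n = (k : ℝ) / n + 1 / n := by ring
  rw [e] at huI
  refine xav_close hd n hn0 k _ ε fun v hv => hu _ _ ?_
  rw [e] at hv
  rw [abs_lt]; constructor <;> linarith [hv.1, hv.2, huI.1, huI.2]

end


section
set_option linter.unusedSectionVars false
variable {E : Type*} [NormedAddCommGroup E] [InnerProductSpace ℝ E]

lemma xnorm_deriv (x e : E) (hx : x ≠ 0) :
    HasDerivAt (fun τ : ℝ => ‖x + τ • e‖) (inner ℝ (xun x) e) 0 := by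
  have h1 : HasDerivAt (fun τ : ℝ => x + τ • e) e 0 := by
    simpa using ((hasDerivAt_id (0:ℝ)).smul_const e).const_add x
  have h2 := h1.norm_sq.sqrt (by simpa using hx)
  simp only [zero_smul, add_zero, Real.sqrt_sq (norm_nonneg _)] at h2
  convert h2 using 1
  unfold xun
  rw [real_inner_smul_left]
  have : ‖x‖ ≠ 0 := norm_ne_zero_iff.2 hx
  field_simp

lemma xcrit (n : ℕ) (A : ℕ → E) (c : E) (hA : ∀ k, A k + c ≠ 0)
    (hmin : ∀ᶠ c' in nhds c, ∑ k ∈ Finset.range n, ‖A k + c‖ ≤ ∑ k ∈ Finset.range n, ‖A k + c'‖) :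
    ∑ k ∈ Finset.range n, xun (A k + c) = 0 := by
  set U := ∑ k ∈ Finset.range n, xun (A k + c) with hU
  have hd : HasDerivAt (fun τ : ℝ => ∑ k ∈ Finset.range n, ‖(A k + c) + τ • U‖)
      (∑ k ∈ Finset.range n, inner ℝ (xun (A k + c)) U) 0 :=
    HasDerivAt.fun_sum fun k _ => xnorm_deriv _ _ (hA k)
  have hloc : IsLocalMin (fun τ : ℝ => ∑ k ∈ Finset.range n, ‖(A k + c) + τ • U‖) 0 := by
    have ht : Tendsto (fun τ : ℝ => c + τ • U) (nhds 0) (nhds c) := by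
      have : Continuous (fun τ : ℝ => c + τ • U) := by fun_prop
      simpa using this.tendsto 0
    have := ht.eventually hmin
    filter_upwards [this] with τ hτ
    simpa [add_assoc] using hτ
  have h0 := hloc.hasDerivAt_eq_zero hd
  rw [← sum_inner, ← hU] at h0
  exact inner_self_eq_zero.1 h0

lemma xFpos {γ T : ℝ → E} (hd : ∀ s, HasDerivAt γ (T s) s) (hT : Continuous T)
    (hp : Function.Periodic γ 1) (hn : ∀ s, ‖T s‖ = 1) (c : E) (hc : c ≠ 0) :
    1 < ∫ s in (0:ℝ)..1, ‖T s + c‖ := by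
  have hdc : ∀ s, HasDerivAt (fun s => inner ℝ c (γ s)) (inner ℝ c (T s)) s := fun s => by
    simpa using (hasDerivAt_const s c).inner ℝ (hd s)
  have h01 : γ 1 = γ 0 := by simpa using hp 0
  have hint : ∫ s in (0:ℝ)..1, inner ℝ c (T s) = 0 := by
    rw [intervalIntegral.integral_eq_sub_of_hasDerivAt (fun s _ => hdc s)
      (Continuous.intervalIntegrable (by fun_prop) _ _), h01, sub_self]
  obtain ⟨s0, hs0, hs0'⟩ := exists_deriv_eq_zero (f := fun s => inner ℝ c (γ s)) (a := 0) (b := 1)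
    one_pos (fun s _ => (hdc s).continuousAt.continuousWithinAt) (by simp [h01])
  rw [(hdc s0).deriv] at hs0'
  have hpos : 0 < ∫ s in (0:ℝ)..1, (‖T s + c‖ - (1 + inner ℝ c (T s))) := by
    refine intervalIntegral.integral_pos one_pos (by fun_prop) (fun s _ => ?_)
      ⟨s0, ⟨hs0.1.le, hs0.2.le⟩, ?_⟩
    · have := real_inner_le_norm (T s + c) (T s)
      rw [inner_add_left, real_inner_self_eq_norm_sq, hn] at this
      linarith
    · rw [hs0', add_zero, sub_pos]
      have h1 : ‖T s0 + c‖ ^ 2 = 1 + ‖c‖ ^ 2 := by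
        rw [norm_add_sq_real, hn, real_inner_comm, hs0']; ring
      have h2 : 0 < ‖c‖ := norm_pos_iff.2 hc
      nlinarith [norm_nonneg (T s0 + c)]
  rw [intervalIntegral.integral_sub (Continuous.intervalIntegrable (by fun_prop) _ _)
    (Continuous.intervalIntegrable (by fun_prop) _ _),
    intervalIntegral.integral_add (Continuous.intervalIntegrable (by fun_prop) _ _)
    (Continuous.intervalIntegrable (by fun_prop) _ _), hint] at hpos
  simp at hpos
  exact hpos

lemma xriem {T : ℝ → E} (hT : Continuous T) (n : ℕ) (hn : 0 < n) (A : ℤ → E) (ε : ℝ)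
    (h : ∀ k : ℤ, ∀ u ∈ Set.Icc ((k : ℝ) / n) (((k : ℝ) + 1) / n), ‖A k - T u‖ ≤ ε) (c : E) :
    ∫ s in (0:ℝ)..1, ‖T s + c‖ ≤ (1 / n) * ∑ k ∈ Finset.range n, ‖A k + c‖ + ε := by
  have hn' : (0 : ℝ) < n := by exact_mod_cast hn
  have hs := intervalIntegral.sum_integral_adjacent_intervals (f := fun s => ‖T s + c‖) (μ := volume)
    (a := fun k : ℕ => (k : ℝ) / n) (n := n)
    (fun k _ => Continuous.intervalIntegrable (by fun_prop) _ _)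
  simp only [Nat.cast_zero, zero_div, div_self hn'.ne'] at hs
  rw [← hs]
  have : ∀ k ∈ Finset.range n, ∫ s in ((k:ℝ) / n)..(((k+1 : ℕ) : ℝ) / n), ‖T s + c‖
      ≤ (1 / n) * (‖A k + c‖ + ε) := by
    intro k _
    have hle : ((k:ℝ) / n) ≤ (((k+1 : ℕ) : ℝ) / n) := by gcongr; simp
    have := intervalIntegral.integral_mono_on hle (f := fun s => ‖T s + c‖)
      (g := fun _ => ‖A k + c‖ + ε) (μ := volume)
      (Continuous.intervalIntegrable (by fun_prop) _ _)
      (Continuous.intervalIntegrable (by fun_prop) _ _) (fun u hu => ?_)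
    · refine this.trans (le_of_eq ?_)
      rw [intervalIntegral.integral_const, smul_eq_mul]
      congr 1; push_cast; ring
    · have h1 := h k u (by simpa using hu)
      have h2 := norm_sub_norm_le (T u + c) (A k + c)
      have h3 : T u + c - (A k + c) = -(A k - T u) := by abel
      rw [h3, norm_neg] at h2
      linarith
  refine (Finset.sum_le_sum this).trans (le_of_eq ?_)
  rw [← Finset.mul_sum, Finset.sum_add_distrib]
  simp
  field_simp

lemma xclose [FiniteDimensional ℝ E] {γ T : ℝ → E} (hd : ∀ s, HasDerivAt γ (T s) s)
    (hT : Continuous T)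
    (hp : Function.Periodic γ 1) (hpT : Function.Periodic T 1) (hn : ∀ s, ‖T s‖ = 1) :
    ∃ c : ℕ → E, Tendsto c atTop (nhds 0) ∧ ∀ᶠ n : ℕ in atTop,
      (∀ k : ℤ, xav γ n k + c n ≠ 0) ∧ ∑ k ∈ Finset.range n, xun (xav γ n k + c n) = 0 := by
  have hex : ∀ n : ℕ, ∃ c ∈ Metric.closedBall (0:E) 3, IsMinOn
      (fun c => ∑ k ∈ Finset.range n, ‖xav γ n k + c‖) (Metric.closedBall 0 3) c := fun n =>
    (isCompact_closedBall (0:E) 3).exists_isMinOn ⟨0, by simp⟩ (by fun_prop)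
  choose c hc3 hcmin using hex
  have hc0 : Tendsto c atTop (nhds 0) := by
    rw [Metric.tendsto_nhds]
    intro ρ hρ
    have hcont : Continuous (fun c : E => ∫ s in (0:ℝ)..1, ‖T s + c‖) := by
      apply intervalIntegral.continuous_parametric_intervalIntegral_of_continuous'
      fun_prop
    have hη : ∃ η > 0, ∀ c : E, ρ ≤ ‖c‖ → ‖c‖ ≤ 3 → 1 + η ≤ ∫ s in (0:ℝ)..1, ‖T s + c‖ := by
      have hK : IsCompact (Metric.closedBall (0:E) 3 ∩ {c | ρ ≤ ‖c‖}) :=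
        (isCompact_closedBall (0:E) 3).inter_right (isClosed_le continuous_const continuous_norm)
      by_cases hne : (Metric.closedBall (0:E) 3 ∩ {c | ρ ≤ ‖c‖}).Nonempty
      · obtain ⟨c0, hc0, hm⟩ := hK.exists_isMinOn hne hcont.continuousOn
        refine ⟨(∫ s in (0:ℝ)..1, ‖T s + c0‖) - 1, ?_, fun c h1 h2 => ?_⟩
        · have : c0 ≠ 0 := by
            rintro rfl
            have := hc0.2
            simp at this
            linarith
          linarith [xFpos hd hT hp hn c0 this]
        · have := hm (a := c) ⟨by simpa using h2, h1⟩
          simp only [Set.mem_setOf_eq] at this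
          linarith
      · exact ⟨1, one_pos, fun c h1 h2 => (hne ⟨c, by simpa using h2, h1⟩).elim⟩
    obtain ⟨η, hη, hF⟩ := hη
    filter_upwards [xav_unif hd hT hpT (η/2) (by positivity), eventually_gt_atTop 0] with n h1 h0
    rw [dist_zero_right]
    by_contra! hcon
    have hc3' : ‖c n‖ ≤ 3 := by simpa using hc3 n
    have hA := hF (c n) hcon hc3'
    have hB := xriem hT n h0 (fun k => xav γ n k) (η/2) h1 (c n)
    have hC : ∑ k ∈ Finset.range n, ‖xav γ n k + c n‖ ≤ ∑ k ∈ Finset.range n, ‖xav γ n k + 0‖ :=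
      hcmin n (a := 0) (by simp)
    have hD : ∑ k ∈ Finset.range n, ‖xav γ n k + 0‖ ≤ n := by
      have : ∀ k ∈ Finset.range n, ‖xav γ n k + 0‖ ≤ 1 := fun k _ => by
        have := xav_close hd n h0 k 0 1 (fun u _ => by simp [hn])
        simpa using this
      simpa using Finset.sum_le_sum this
    have hn' : (0 : ℝ) < n := by exact_mod_cast h0
    have hE : (1 / n : ℝ) * ∑ k ∈ Finset.range n, ‖xav γ n k + c n‖ ≤ 1 := by
      rw [one_div, inv_mul_le_iff₀ hn']; linarith
    linarith
  refine ⟨c, hc0, ?_⟩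
  filter_upwards [xav_unif hd hT hpT (1/4) (by norm_num), eventually_gt_atTop 0,
    (Metric.tendsto_nhds.1 hc0) (1/4) (by norm_num)] with n h1 h0 h2
  rw [dist_zero_right] at h2
  have hne : ∀ k : ℤ, xav γ n k + c n ≠ 0 := by
    intro k h
    have a1 := h1 k ((k:ℝ)/n) ⟨le_rfl, by gcongr; linarith⟩
    have a2 : xav γ n k = - c n := eq_neg_of_add_eq_zero_left h
    have a3 := norm_sub_norm_le (T ((k:ℝ)/n)) (xav γ n k)
    rw [norm_sub_rev, hn, a2, norm_neg] at a3
    rw [a2] at a1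
    linarith
  refine ⟨hne, xcrit n (fun k => xav γ n k) (c n) (fun k => hne k) ?_⟩
  have : Metric.closedBall (0:E) 3 ∈ nhds (c n) :=
    Metric.closedBall_mem_nhds_of_mem (by simp; linarith)
  filter_upwards [this] with c' hc'
  exact hcmin n hc'

end

lemma xregular (d : ℕ) (hd : 2 ≤ d) (n : ℕ) (hn : 3 ≤ n) :
    ∃ B : ℤ → EuclideanSpace ℝ (Fin d), (∀ k, ‖B k‖ = 1) ∧ (∀ k, B (k + n) = B k) ∧
      ∑ k ∈ Finset.range n, B k = 0 := by
  set e0 : EuclideanSpace ℝ (Fin d) := EuclideanSpace.single ⟨0, by omega⟩ 1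
  set e1 : EuclideanSpace ℝ (Fin d) := EuclideanSpace.single ⟨1, by omega⟩ 1
  have h01 : inner ℝ e0 e1 = 0 := by
    simp [e0, e1, EuclideanSpace.inner_single_left]
  have hn' : (n : ℝ) ≠ 0 := by positivity
  refine ⟨fun k => cos (2 * π * k / n) • e0 + sin (2 * π * k / n) • e1, fun k => ?_, fun k => ?_, ?_⟩
  · have : ‖cos (2 * π * k / n) • e0 + sin (2 * π * k / n) • e1‖ ^ 2 = 1 := by
      rw [norm_add_sq_real, norm_smul, norm_smul, real_inner_smul_left, real_inner_smul_right, h01]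
      simp [e0, e1]
    nlinarith [norm_nonneg (cos (2 * π * k / n) • e0 + sin (2 * π * k / n) • e1)]
  · have : 2 * π * ((k + n : ℤ) : ℝ) / n = 2 * π * k / n + 2 * π := by
      push_cast; field_simp
    simp only [this, cos_add_two_pi, sin_add_two_pi]
  · have h := (Complex.isPrimitiveRoot_exp n (by omega)).geom_sum_eq_zero (by omega)
    have hk : ∀ k : ℕ, Complex.exp (2 * π * Complex.I / n) ^ k
        = Complex.exp (((2 * π * k / n : ℝ) : ℂ) * Complex.I) := by
      intro k
      rw [← Complex.exp_nat_mul]; congr 1; push_cast; ring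
    simp only [hk] at h
    have hre := congrArg Complex.re h
    have him := congrArg Complex.im h
    simp only [Complex.re_sum, Complex.im_sum, Complex.exp_ofReal_mul_I_re,
      Complex.exp_ofReal_mul_I_im, Complex.zero_re, Complex.zero_im] at hre him
    simp only [Int.cast_natCast]
    rw [Finset.sum_add_distrib, ← Finset.sum_smul, ← Finset.sum_smul, hre, him]
    simp


noncomputable def xpoly {E : Type*} [NormedAddCommGroup E] [InnerProductSpace ℝ E]
    (n : ℕ) (B : ℤ → E) (x0 : E) (u : ℝ) : E := x0 + ∫ v in (0:ℝ)..u, B ⌊(n:ℝ) * v⌋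

section
set_option linter.unusedSectionVars false
variable {E : Type*} [NormedAddCommGroup E] [InnerProductSpace ℝ E]

lemma xstep_int (n : ℕ) (B : ℤ → E) (hB : ∀ k, ‖B k‖ = 1) (a b : ℝ) :
    IntervalIntegrable (fun v : ℝ => B ⌊(n:ℝ) * v⌋) volume a b := by
  have hm : StronglyMeasurable (fun v : ℝ => B ⌊(n:ℝ) * v⌋) :=
    (StronglyMeasurable.of_discrete (f := B)).comp_measurable
      (Int.measurable_floor.comp (measurable_const.mul measurable_id))
  rw [intervalIntegrable_iff]
  exact Measure.integrableOn_of_bounded (M := 1) (by simp [Set.uIoc])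
    hm.aestronglyMeasurable (Eventually.of_forall fun v => by simp [hB])

lemma xstep_val (n : ℕ) (hn : 0 < n) (B : ℤ → E) (i : ℤ) (u : ℝ)
    (h1 : (i:ℝ) / n ≤ u) (h2 : u ≤ ((i:ℝ) + 1) / n) [CompleteSpace E] :
    ∫ v in ((i:ℝ)/n)..u, B ⌊(n:ℝ) * v⌋ = (u - (i:ℝ)/n) • B i := by
  have hn' : (0 : ℝ) < n := by exact_mod_cast hn
  rw [intervalIntegral.integral_congr_Ioo_of_le (g := fun _ => B i) h1,
    intervalIntegral.integral_const]
  intro v hv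
  have : ⌊(n:ℝ) * v⌋ = i := by
    rw [Int.floor_eq_iff]
    have a1 := hv.1
    have a2 := hv.2.trans_le h2
    rw [div_lt_iff₀ hn'] at a1
    rw [lt_div_iff₀ hn'] at a2
    constructor <;> linarith
  simp only [this]

lemma xpoly_affine (n : ℕ) (hn : 0 < n) (B : ℤ → E) (hB : ∀ k, ‖B k‖ = 1) [CompleteSpace E] (x0 : E)
    (i : ℤ) (u : ℝ) (hu : u ∈ Set.Icc ((i:ℝ) / n) (((i:ℝ) + 1) / n)) :
    xpoly n B x0 u = xpoly n B x0 ((i:ℝ)/n) + (u - (i:ℝ)/n) • B i := by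
  unfold xpoly
  rw [← xstep_val n hn B i u hu.1 hu.2, add_assoc,
    intervalIntegral.integral_add_adjacent_intervals (xstep_int n B hB _ _) (xstep_int n B hB _ _)]

lemma xpoly_periodic (n : ℕ) (hn : 0 < n) (B : ℤ → E) (hB : ∀ k, ‖B k‖ = 1) [CompleteSpace E] (x0 : E)
    (hper : ∀ k, B (k + n) = B k) (hsum : ∑ k ∈ Finset.range n, B k = 0) :
    Function.Periodic (xpoly n B x0) 1 := by
  have hn' : (0 : ℝ) < n := by exact_mod_cast hn
  have hg : Function.Periodic (fun v : ℝ => B ⌊(n:ℝ) * v⌋) 1 := by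
    intro v
    have : ⌊(n:ℝ) * (v + 1)⌋ = ⌊(n:ℝ) * v⌋ + n := by
      rw [mul_add, mul_one]; exact Int.floor_add_natCast _ _
    simp only [this, hper]
  have h0 : ∫ v in (0:ℝ)..1, B ⌊(n:ℝ) * v⌋ = 0 := by
    have hs := intervalIntegral.sum_integral_adjacent_intervals (f := fun v : ℝ => B ⌊(n:ℝ) * v⌋)
      (μ := volume) (a := fun k : ℕ => (k : ℝ) / n) (n := n)
      (fun k _ => xstep_int n B hB _ _)
    simp only [Nat.cast_zero, zero_div, div_self hn'.ne'] at hs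
    rw [← hs]
    have : ∀ k ∈ Finset.range n, ∫ v in ((k:ℝ) / n)..(((k+1 : ℕ) : ℝ) / n), B ⌊(n:ℝ) * v⌋
        = (1 / n : ℝ) • B k := by
      intro k _
      have := xstep_val n hn B k (((k+1 : ℕ) : ℝ) / n) (by push_cast; gcongr; linarith)
        (by push_cast; rfl)
      simp only [Int.cast_natCast] at this
      rw [this]; congr 1; push_cast; ring
    rw [Finset.sum_congr rfl this, ← Finset.smul_sum, hsum, smul_zero]
  intro u
  unfold xpoly
  rw [← intervalIntegral.integral_add_adjacent_intervals (xstep_int n B hB 0 u)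
    (xstep_int n B hB u (u+1)), hg.intervalIntegral_add_eq u 0, zero_add, h0, add_zero]

lemma xpoly_close {γ T : ℝ → E} (hd : ∀ s, HasDerivAt γ (T s) s) (hT : Continuous T)
    (hp : Function.Periodic γ 1)
    (n : ℕ) (hn : 0 < n) (B : ℤ → E) (hB : ∀ k, ‖B k‖ = 1) [CompleteSpace E]
    (hper : ∀ k, B (k + n) = B k) (hsum : ∑ k ∈ Finset.range n, B k = 0) (ε : ℝ)
    (h : ∀ k : ℤ, ∀ u ∈ Set.Icc ((k : ℝ) / n) (((k : ℝ) + 1) / n), ‖B k - T u‖ ≤ ε) (u : ℝ) :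
    ‖xpoly n B (γ 0) u - γ u‖ ≤ ε := by
  have hn' : (0 : ℝ) < n := by exact_mod_cast hn
  have hε : 0 ≤ ε := (norm_nonneg _).trans (h 0 0 (by simp))
  have key : ∀ w : ℝ, 0 ≤ w → w ≤ 1 → ‖xpoly n B (γ 0) w - γ w‖ ≤ ε := by
    intro w h0 h1
    have e : γ w = γ 0 + ∫ v in (0:ℝ)..w, T v := by
      rw [intervalIntegral.integral_eq_sub_of_hasDerivAt (fun s _ => hd s)
        (hT.intervalIntegrable _ _)]; abel
    have : xpoly n B (γ 0) w - γ w = ∫ v in (0:ℝ)..w, (B ⌊(n:ℝ) * v⌋ - T v) := by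
      rw [e, intervalIntegral.integral_sub (xstep_int n B hB _ _) (hT.intervalIntegrable _ _)]
      unfold xpoly; abel
    rw [this]
    refine (intervalIntegral.norm_integral_le_of_norm_le_const (C := ε) fun v _ => h _ _ ?_).trans ?_
    · rw [Set.mem_Icc, div_le_iff₀ hn', le_div_iff₀ hn']
      constructor
      · linarith [Int.floor_le ((n:ℝ) * v)]
      · linarith [Int.lt_floor_add_one ((n:ℝ) * v)]
    · rw [sub_zero, abs_of_nonneg h0]; nlinarith
  have e1 : γ u = γ (Int.fract u) := by
    have := hp.sub_zsmul_eq ⌊u⌋ (x := u); simpa using this.symm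
  have e2 : xpoly n B (γ 0) u = xpoly n B (γ 0) (Int.fract u) := by
    have := (xpoly_periodic n hn B hB (γ 0) hper hsum).sub_zsmul_eq ⌊u⌋ (x := u)
    simpa using this.symm
  rw [e1, e2]
  exact key _ (Int.fract_nonneg _) (Int.fract_lt_one _).le

lemma xceil_sum (n : ℕ) (hn : 0 < n) (f : ℤ → ℝ) :
    ∫ s in Set.Ioc (0:ℝ) 1, f ⌈(n:ℝ) * s⌉ = (1 / n : ℝ) * ∑ i ∈ Finset.Icc (1:ℤ) n, f i := by
  have hn' : (0 : ℝ) < n := by exact_mod_cast hn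
  have hcell : ∀ k : ℕ, ∀ v ∈ Set.Ioc ((k:ℝ)/n) (((k+1:ℕ):ℝ)/n), f ⌈(n:ℝ) * v⌉ = f (k+1) := by
    intro k v hv
    congr 1
    rw [Int.ceil_eq_iff]
    have a1 := hv.1
    have a2 := hv.2
    rw [div_lt_iff₀ hn'] at a1
    rw [le_div_iff₀ hn'] at a2
    push_cast at a2 ⊢
    constructor <;> linarith
  have hle : ∀ k : ℕ, ((k:ℝ)/n) ≤ (((k+1:ℕ):ℝ)/n) := fun k => by gcongr; simp
  have hs := intervalIntegral.sum_integral_adjacent_intervals (f := fun v : ℝ => f ⌈(n:ℝ) * v⌉)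
      (μ := volume) (a := fun k : ℕ => (k : ℝ) / n) (n := n) (fun k _ => by
        rw [intervalIntegrable_iff_integrableOn_Ioc_of_le (hle k)]
        exact (integrableOn_const (by simp)).congr_fun
          (fun v hv => (hcell k v hv).symm) measurableSet_Ioc)
  simp only [Nat.cast_zero, zero_div, div_self hn'.ne'] at hs
  rw [← intervalIntegral.integral_of_le zero_le_one, ← hs]
  have : ∀ k ∈ Finset.range n, ∫ v in ((k:ℝ) / n)..(((k+1 : ℕ) : ℝ) / n), f ⌈(n:ℝ) * v⌉
        = (1 / n : ℝ) * f (k+1) := by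
    intro k _
    rw [intervalIntegral.integral_of_le (hle k), setIntegral_congr_fun measurableSet_Ioc (hcell k)]
    have e : (((k+1 : ℕ) : ℝ) / n) - (k:ℝ) / n = 1 / n := by push_cast; ring
    rw [setIntegral_const, smul_eq_mul, measureReal_def, Real.volume_Ioc, e,
      ENNReal.toReal_ofReal (by positivity)]
  rw [Finset.sum_congr rfl this, ← Finset.mul_sum]
  congr 1
  refine Finset.sum_bij (fun k _ => (k:ℤ) + 1) ?_ ?_ ?_ ?_
  · intro k hk; simp at hk ⊢; omega
  · intro a _ b _ h; simpa using h
  · intro b hb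
    simp at hb
    exact ⟨(b-1).toNat, by simp; omega, by simp; omega⟩
  · intro k _; rfl

end


lemma xscal (α κ x ρ : ℝ) (hα : 0 < α) (hκ : 0 < κ) (hx : 0 < x) (h1 : κ * x ≤ ρ) (h2 : ρ ≤ x) :
    0 ≤ ρ ^ (-α) - x ^ (-α) ∧
    ρ ^ (-α) - x ^ (-α) ≤ κ ^ (-α) * max α 1 * (x ^ (-α) * ((x - ρ) / x)) := by
  have hρ : 0 < ρ := lt_of_lt_of_le (by positivity) h1
  constructor
  · rw [sub_nonneg]; exact Real.rpow_le_rpow_of_nonpos hρ h2 (by linarith)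
  have e1 : ρ ^ (-α) - x ^ (-α) = ρ ^ (-α) * (1 - (ρ / x) ^ α) := by
    rw [Real.div_rpow hρ.le hx.le, Real.rpow_neg hρ.le, Real.rpow_neg hx.le]
    have := (Real.rpow_pos_of_pos hρ α).ne'
    have := (Real.rpow_pos_of_pos hx α).ne'
    field_simp
  have hw0 : 0 < ρ / x := by positivity
  have hw1 : ρ / x ≤ 1 := by rw [div_le_one hx]; exact h2
  have e2 : 1 - (ρ / x) ^ α ≤ max α 1 * (1 - ρ / x) := by
    rcases le_total 1 α with h | h
    · rw [max_eq_left h]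
      have := one_add_mul_self_le_rpow_one_add (s := ρ / x - 1) (by linarith) h
      rw [add_sub_cancel] at this
      linarith
    · rw [max_eq_right h]
      have := Real.rpow_le_rpow_of_exponent_ge hw0 hw1 h
      rw [Real.rpow_one] at this
      linarith
  have e3 : ρ ^ (-α) ≤ κ ^ (-α) * x ^ (-α) := by
    rw [← Real.mul_rpow hκ.le hx.le]
    exact Real.rpow_le_rpow_of_nonpos (by positivity) h1 (by linarith)
  have e4 : (x - ρ) / x = 1 - ρ / x := by field_simp
  rw [e1, e4]
  have h5 : 0 ≤ 1 - ρ / x := by linarith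
  have h6 : 0 < max α 1 := by positivity
  calc _ ≤ (ρ ^ (-α)) * (max α 1 * (1 - ρ / x)) := by gcongr
    _ ≤ (κ ^ (-α) * x ^ (-α)) * (max α 1 * (1 - ρ / x)) := by gcongr
    _ = _ := by ring

section
set_option linter.unusedSectionVars false
variable {E : Type*} [NormedAddCommGroup E] [InnerProductSpace ℝ E]

lemma xdefect (n m : ℕ) (hn : 0 < n) (b : ℕ → E) (hb : ∀ k, ‖b k‖ = 1) (w : E) (hw : ‖w‖ = 1) :
    (m : ℝ) / n - ‖(1 / n : ℝ) • ∑ k ∈ Finset.range m, b k‖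
      ≤ (1 / n) * ∑ k ∈ Finset.range m, ‖b k - w‖ ^ 2 := by
  have hn' : (0 : ℝ) < n := by exact_mod_cast hn
  have h1 := real_inner_le_norm ((1 / n : ℝ) • ∑ k ∈ Finset.range m, b k) w
  rw [hw, mul_one, real_inner_smul_left, sum_inner] at h1
  have h2 : ∀ k, inner ℝ (b k) w = 1 - ‖b k - w‖ ^ 2 / 2 := by
    intro k
    rw [norm_sub_sq_real, hb, hw]; ring
  simp only [h2, Finset.sum_sub_distrib, Finset.sum_const, Finset.card_range, nsmul_eq_mul, mul_one,
    ← Finset.sum_div] at h1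
  have h3 : 0 ≤ (1 / n : ℝ) * ∑ k ∈ Finset.range m, ‖b k - w‖ ^ 2 := by positivity
  have e : (1 / n : ℝ) * (m - (∑ k ∈ Finset.range m, ‖b k - w‖ ^ 2) / 2)
    = m / n - ((1 / n : ℝ) * ∑ k ∈ Finset.range m, ‖b k - w‖ ^ 2) / 2 := by ring
  rw [e] at h1
  linarith

lemma xjensen [CompleteSpace E] {γ T : ℝ → E} (hd : ∀ s, HasDerivAt γ (T s) s) (hT : Continuous T)
    (n : ℕ) (hn : 0 < n) (k : ℤ) (v : E) (r : ℝ) (hr : 1 ≤ r) :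
    ‖xav γ n k - v‖ ^ r ≤ n * ∫ u in ((k:ℝ)/n)..(((k:ℝ)+1)/n), ‖T u - v‖ ^ r := by
  have hn' : (0 : ℝ) < n := by exact_mod_cast hn
  have e : ((k : ℝ) + 1) / n - (k : ℝ) / n = 1 / n := by ring
  have hle : (k : ℝ) / n ≤ ((k : ℝ) + 1) / n := by gcongr; linarith
  have h1 : xav γ n k - v = (n:ℝ) • ∫ u in ((k:ℝ)/n)..(((k:ℝ)+1)/n), (T u - v) := by
    rw [intervalIntegral.integral_sub (hT.intervalIntegrable _ _) (by simp),
      intervalIntegral.integral_eq_sub_of_hasDerivAt (fun s _ => hd s) (hT.intervalIntegrable _ _),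
      intervalIntegral.integral_const, e, smul_sub (n:ℝ) (_ - _), smul_smul]
    have : (n:ℝ) * (1 / n) = 1 := by field_simp
    rw [this, one_smul]; rfl
  have h2 : ‖xav γ n k - v‖ ≤ n * ∫ u in ((k:ℝ)/n)..(((k:ℝ)+1)/n), ‖T u - v‖ := by
    rw [h1, norm_smul, Real.norm_eq_abs, abs_of_pos hn']
    gcongr
    exact intervalIntegral.norm_integral_le_integral_norm hle
  have hc : Continuous fun u => ‖T u - v‖ ^ r :=
    (by fun_prop : Continuous fun u => ‖T u - v‖).rpow_const (fun _ => Or.inr (by linarith))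
  set μ := volume.restrict (Set.Ioc ((k:ℝ)/n) (((k:ℝ)+1)/n)) with hμ
  have hμu : μ.real Set.univ = 1 / n := by
    rw [hμ, measureReal_restrict_apply_univ, measureReal_def, Real.volume_Ioc, e,
      ENNReal.toReal_ofReal (by positivity)]
  have : NeZero μ := ⟨by intro h; rw [h] at hμu; have h0 := one_div_pos.2 hn'; rw [← hμu] at h0; simp at h0⟩
  have hJ := (convexOn_rpow hr).map_average_le (μ := μ) (f := fun u => ‖T u - v‖)
    ((Real.continuous_rpow_const (by linarith)).continuousOn) isClosed_Ici
    (Eventually.of_forall fun u => norm_nonneg _)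
    ((by fun_prop : Continuous fun u => ‖T u - v‖).integrableOn_Ioc)
    (hc.integrableOn_Ioc)
  rw [average_eq, average_eq, hμu] at hJ
  simp only [one_div, inv_inv, smul_eq_mul] at hJ
  rw [intervalIntegral.integral_of_le hle] at h2 ⊢
  exact (Real.rpow_le_rpow (norm_nonneg _) h2 (by linarith)).trans hJ

lemma xdiff (n : ℕ) (hn : 0 < n) (p : ℝ → E) (B : ℤ → E)
    (haff : ∀ i : ℤ, ∀ u ∈ Set.Icc ((i:ℝ) / n) (((i:ℝ) + 1) / n),
      p u = p ((i:ℝ)/n) + (u - (i:ℝ)/n) • B i) (a : ℤ) (m : ℕ) :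
    p (((a + m : ℤ) : ℝ) / n) - p ((a:ℝ) / n) = (1 / n : ℝ) • ∑ k ∈ Finset.range m, B (a + k) := by
  have hn' : (0 : ℝ) < n := by exact_mod_cast hn
  induction m with
  | zero => simp
  | succ m ih =>
    rw [Finset.sum_range_succ, smul_add, ← ih]
    have := haff (a + m) (((a + (m+1 : ℕ) : ℤ) : ℝ) / n) (by
      constructor
      · gcongr; push_cast; linarith
      · apply le_of_eq; push_cast; ring)
    rw [this]
    have e : ((a + (m+1 : ℕ) : ℤ) : ℝ) / n - ((a + m : ℤ) : ℝ) / n = 1 / n := by push_cast; ring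
    rw [e]; abel

lemma xM1 [CompleteSpace E] {γ T : ℝ → E} (hd : ∀ s, HasDerivAt γ (T s) s) (hT : Continuous T)
    (hnT : ∀ s, ‖T s‖ = 1)
    (n m : ℕ) (hn : 0 < n) (hm : 0 < m) (a : ℤ) (p : ℝ → E) (B : ℤ → E)
    (haff : ∀ i : ℤ, ∀ u ∈ Set.Icc ((i:ℝ) / n) (((i:ℝ) + 1) / n),
      p u = p ((i:ℝ)/n) + (u - (i:ℝ)/n) • B i)
    (c : E) (hc : ‖c‖ ≤ 1 / 2) (hne : ∀ k, xav γ n k + c ≠ 0) (hBd : ∀ k, B k = xun (xav γ n k + c))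
    (κ : ℝ) (hκ : 0 < κ)
    (hlow : κ * ((m:ℝ) / n) ≤ ‖p (((a + m : ℤ) : ℝ) / n) - p ((a:ℝ) / n)‖)
    (α q : ℝ) (hα : 0 < α) (hq : 1 ≤ q) (s : ℝ) :
    0 ≤ ‖p (((a + m : ℤ) : ℝ) / n) - p ((a:ℝ) / n)‖ ^ (-α) - ((m:ℝ) / n) ^ (-α) ∧
    (‖p (((a + m : ℤ) : ℝ) / n) - p ((a:ℝ) / n)‖ ^ (-α) - ((m:ℝ) / n) ^ (-α)) ^ q ≤
      ((κ ^ (-α) * max α 1) ^ q * 4 ^ (2 * q)) * (((m:ℝ) / n) ^ (-(α * q) - 1) *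
        ∫ u in ((a:ℝ)/n)..(((a + m : ℤ) : ℝ) / n), ‖T s - T u‖ ^ (2 * q)) := by
  have hn' : (0 : ℝ) < n := by exact_mod_cast hn
  have hm' : (0 : ℝ) < m := by exact_mod_cast hm
  have hx : 0 < (m:ℝ) / n := by positivity
  have hB : ∀ k, ‖B k‖ = 1 := fun k => by rw [hBd]; exact xun_norm (hne k)
  have hV := xdiff n hn p B haff a m
  set ρ := ‖p (((a + m : ℤ) : ℝ) / n) - p ((a:ℝ) / n)‖ with hρ
  have hρx : ρ ≤ (m:ℝ) / n := by
    rw [hρ, hV, norm_smul, Real.norm_eq_abs, abs_of_pos (by positivity)]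
    have := norm_sum_le (Finset.range m) (fun k : ℕ => B (a + k))
    simp only [hB, Finset.sum_const, Finset.card_range, nsmul_eq_mul, mul_one] at this
    calc _ ≤ (1 / n : ℝ) * m := by gcongr
      _ = _ := by ring
  obtain ⟨hb0, hb1⟩ := xscal α κ _ ρ hα hκ hx hlow hρx
  refine ⟨hb0, ?_⟩
  have hyn : 1 / 2 ≤ ‖T s + c‖ := by
    have := norm_sub_norm_le (T s) (-c)
    rw [norm_neg, hnT, sub_neg_eq_add] at this
    linarith
  have hyne : T s + c ≠ 0 := norm_pos_iff.1 (by linarith)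
  set w := xun (T s + c) with hw
  have hdef := xdefect n m hn (fun k => B (a + k)) (fun k => hB _) w (xun_norm hyne)
  rw [← hV, ← hρ] at hdef
  have hquot : ((m:ℝ) / n - ρ) / ((m:ℝ) / n) ≤ ∑ k ∈ Finset.range m, (1 / m : ℝ) * ‖B (a + k) - w‖ ^ 2 := by
    rw [div_le_iff₀ hx, ← Finset.mul_sum]
    refine hdef.trans (le_of_eq ?_)
    field_simp
  have hBw : ∀ k, ‖B k - w‖ ≤ 4 * ‖xav γ n k - T s‖ := by
    intro k
    rw [hBd, hw]
    refine (xun_lip _ _ (hne k) hyne).trans ?_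
    rw [div_le_iff₀ (by linarith), add_sub_add_right_eq_sub]
    nlinarith [norm_nonneg (xav γ n k - T s)]
  have hBq : ∀ k : ℕ, (‖B (a + k) - w‖ ^ 2) ^ q ≤ 4 ^ (2 * q) *
      (n * ∫ u in (((a + k : ℤ):ℝ)/n)..((((a + k : ℤ):ℝ)+1)/n), ‖T s - T u‖ ^ (2 * q)) := by
    intro k
    rw [← Real.rpow_natCast, ← Real.rpow_mul (norm_nonneg _)]
    push_cast
    have h2q : 0 ≤ 2 * q := by linarith
    refine (Real.rpow_le_rpow (norm_nonneg _) (hBw _) h2q).trans ?_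
    rw [Real.mul_rpow (by norm_num) (norm_nonneg _)]
    gcongr
    have := xjensen hd hT n hn (a + k) (T s) (2 * q) (by linarith)
    simp only [norm_sub_rev _ (T s)] at this ⊢
    push_cast at this
    exact this
  have hsum : ∑ k ∈ Finset.range m, ∫ u in (((a + k : ℤ):ℝ)/n)..((((a + k : ℤ):ℝ)+1)/n), ‖T s - T u‖ ^ (2 * q)
      = ∫ u in ((a:ℝ)/n)..(((a + m : ℤ) : ℝ) / n), ‖T s - T u‖ ^ (2 * q) := by
    have hc : Continuous fun u => ‖T s - T u‖ ^ (2 * q) :=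
      (by fun_prop : Continuous fun u => ‖T s - T u‖).rpow_const (fun _ => Or.inr (by linarith))
    have := intervalIntegral.sum_integral_adjacent_intervals (f := fun u => ‖T s - T u‖ ^ (2 * q))
      (μ := volume) (a := fun k : ℕ => ((a + k : ℤ) : ℝ) / n) (n := m)
      (fun k _ => hc.intervalIntegrable _ _)
    simp only [Nat.cast_zero, add_zero] at this
    rw [← this]
    refine Finset.sum_congr rfl fun k _ => ?_
    congr 1; push_cast; ring
  have hmean := Real.rpow_arith_mean_le_arith_mean_rpow (Finset.range m) (fun _ => (1 / m : ℝ))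
    (fun k => ‖B (a + k) - w‖ ^ 2) (fun _ _ => by positivity)
    (by simp; field_simp) (fun _ _ => by positivity) hq
  set S := ∑ k ∈ Finset.range m, (1 / m : ℝ) * ‖B (a + k) - w‖ ^ 2 with hS
  set J := ∫ u in ((a:ℝ)/n)..(((a + m : ℤ) : ℝ) / n), ‖T s - T u‖ ^ (2 * q) with hJ
  have hSq : S ^ q ≤ 4 ^ (2 * q) * (((m:ℝ)/n)⁻¹ * J) := by
    refine hmean.trans ?_
    rw [← Finset.mul_sum]
    calc _ ≤ (1 / m : ℝ) * ∑ k ∈ Finset.range m, 4 ^ (2 * q) *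
      (n * ∫ u in (((a + k : ℤ):ℝ)/n)..((((a + k : ℤ):ℝ)+1)/n), ‖T s - T u‖ ^ (2 * q)) := by
          gcongr with k _; exact hBq k
      _ = _ := by rw [← Finset.mul_sum, ← Finset.mul_sum, hsum]; field_simp
  have hS0 : 0 ≤ S := Finset.sum_nonneg fun k _ => by positivity
  have hmx : 0 < κ ^ (-α) * max α 1 := by positivity
  calc _ ≤ (κ ^ (-α) * max α 1 * (((m:ℝ)/n) ^ (-α) * S)) ^ q := by
        apply Real.rpow_le_rpow hb0 _ (by linarith)
        refine hb1.trans ?_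
        gcongr
    _ = (κ ^ (-α) * max α 1) ^ q * ((((m:ℝ)/n) ^ (-(α*q))) * S ^ q) := by
        rw [Real.mul_rpow hmx.le (by positivity), Real.mul_rpow (by positivity) hS0,
          ← Real.rpow_mul hx.le, neg_mul]
    _ ≤ (κ ^ (-α) * max α 1) ^ q * ((((m:ℝ)/n) ^ (-(α*q))) * (4 ^ (2 * q) * (((m:ℝ)/n)⁻¹ * J))) := by
        gcongr
    _ = _ := by
        rw [Real.rpow_sub hx, Real.rpow_one]; field_simp

end


lemma xiD_eq (s t : ℝ) : iDist 1 s t = |t - s - round (t - s)| := by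
  unfold iDist
  apply le_antisymm
  · have hb : BddBelow (Set.range fun k : ℤ => |t - s - (k : ℝ) * 1|) :=
      ⟨0, by rintro _ ⟨k, rfl⟩; positivity⟩
    simpa using ciInf_le hb (round (t - s))
  · exact le_ciInf fun k => by simpa using round_le (t - s) k

lemma xiD_nonneg (s t : ℝ) : 0 ≤ iDist 1 s t := by rw [xiD_eq]; positivity

lemma xiD_le (s t : ℝ) : iDist 1 s t ≤ |s - t| := by
  rw [xiD_eq, abs_sub_comm s t]; simpa using round_le (t - s) 0

lemma xiD_zero {s t : ℝ} (h : iDist 1 s t = 0) : ∃ k : ℤ, t = s + k := by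
  rw [xiD_eq, abs_eq_zero] at h
  exact ⟨_, by linarith⟩

lemma xiD_add (s t : ℝ) (k : ℤ) : iDist 1 (s + k) t = iDist 1 s t := by
  rw [xiD_eq, xiD_eq]
  have : t - (s + k) = t - s - k := by ring
  rw [this, round_sub_intCast]; push_cast; congr 1; ring

lemma xiD_min (s t : ℝ) (hs : s ∈ Set.Ioc (0:ℝ) 1) (ht : t ∈ Set.Ioc (0:ℝ) 1) :
    iDist 1 s t = min |t - s| (1 - |t - s|) := by
  have h1 := hs.1
  have h2 := hs.2
  have h3 := ht.1
  have h4 := ht.2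
  rw [xiD_eq, abs_sub_round_eq_min]
  rcases le_total s t with h | h
  · have : Int.fract (t - s) = t - s := Int.fract_eq_self.2 ⟨by linarith, by linarith⟩
    rw [this, abs_of_nonneg (by linarith)]
  · rcases h.eq_or_lt with rfl | h
    · simp
    have : Int.fract (t - s) = t - s + 1 := by
      rw [Int.fract_eq_iff]; exact ⟨by linarith, by linarith, -1, by push_cast; ring⟩
    rw [this, abs_of_neg (by linarith), min_comm]
    congr 1 <;> ring

lemma xzint (β r : ℝ) (hβ : 0 < β) (hr : 0 < r) :
    ∫⁻ z : ℝ, (if r ≤ |z| then ENNReal.ofReal (|z| ^ (-β - 1)) else 0)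
      ≤ ENNReal.ofReal (2 / β * r ^ (-β)) := by
  have hI : ∫⁻ z in Set.Ioi r, ENNReal.ofReal (z ^ (-β - 1)) = ENNReal.ofReal (r ^ (-β) / β) := by
    rw [← ofReal_integral_eq_lintegral_ofReal (integrableOn_Ioi_rpow_of_lt (by linarith) hr)
      ((ae_restrict_iff' measurableSet_Ioi).2 (Eventually.of_forall fun z hz =>
        Real.rpow_nonneg (hr.le.trans (le_of_lt hz)) _)),
      integral_Ioi_rpow_of_lt (by linarith) hr]
    congr 1
    rw [sub_add_cancel]; rw [div_neg, neg_div, neg_neg]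
  have hI1 : ∫⁻ z in Set.Ici r, ENNReal.ofReal (|z| ^ (-β - 1)) = ENNReal.ofReal (r ^ (-β) / β) := by
    rw [← hI, setLIntegral_congr Ioi_ae_eq_Ici.symm]
    exact setLIntegral_congr_fun measurableSet_Ioi fun z hz => by
      rw [abs_of_pos (hr.trans hz)]
  have hI2 : ∫⁻ z in Set.Iic (-r), ENNReal.ofReal (|z| ^ (-β - 1)) = ENNReal.ofReal (r ^ (-β) / β) := by
    rw [← hI1, ← lintegral_indicator measurableSet_Iic, ← lintegral_indicator measurableSet_Ici,
      ← lintegral_neg_eq_self]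
    congr 1; ext z
    simp [Set.indicator, neg_le_neg_iff]
  have hsub : ∀ z : ℝ, (if r ≤ |z| then ENNReal.ofReal (|z| ^ (-β - 1)) else 0) =
      (Set.Ici r ∪ Set.Iic (-r)).indicator (fun z => ENNReal.ofReal (|z| ^ (-β - 1))) z := by
    intro z
    have : r ≤ |z| ↔ z ∈ (Set.Ici r ∪ Set.Iic (-r)) := by
      rw [le_abs]; simp [le_neg]
    simp only [Set.indicator, this]
  simp only [hsub]
  rw [lintegral_indicator (measurableSet_Ici.union measurableSet_Iic)]
  refine (lintegral_union_le _ _ _).trans ?_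
  rw [hI1, hI2, ← ENNReal.ofReal_add (by positivity) (by positivity)]
  apply ENNReal.ofReal_le_ofReal
  apply le_of_eq; ring

lemma xshift (f : ℝ → ℝ≥0∞) (hf : ∀ u (k : ℤ), f (u + k) = f u) (k : ℤ) :
    ∫⁻ u in Set.Ioc (k : ℝ) (k + 1), f u = ∫⁻ u in Set.Ioc (0:ℝ) 1, f u := by
  rw [← lintegral_indicator measurableSet_Ioc, ← lintegral_indicator measurableSet_Ioc,
    ← lintegral_add_right_eq_self _ (k:ℝ)]
  congr 1; ext u
  simp only [Set.indicator, Set.mem_Ioc, hf]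
  congr 1
  apply propext
  constructor <;> rintro ⟨h1, h2⟩ <;> constructor <;> linarith

lemma xcover (f : ℝ → ℝ≥0∞) (hf : ∀ u (k : ℤ), f (u + k) = f u) :
    ∫⁻ u in Set.Ioc (-4 : ℝ) 4, f u ≤ 8 * ∫⁻ u in Set.Ioc (0:ℝ) 1, f u := by
  have hsub : Set.Ioc (-4 : ℝ) 4 ⊆ ⋃ k : Fin 8, Set.Ioc (((k:ℕ) - 4 : ℤ) : ℝ) (((k:ℕ) - 4 : ℤ) + 1) := by
    intro u hu
    have h1 : -4 < ⌈u⌉ := Int.lt_ceil.2 (by simpa using hu.1)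
    have h2 : ⌈u⌉ ≤ 4 := Int.ceil_le.2 (by simpa using hu.2)
    rw [Set.mem_iUnion]
    refine ⟨⟨(⌈u⌉ + 3).toNat, by omega⟩, ?_⟩
    have e : (((⌈u⌉ + 3).toNat : ℤ) - 4) = ⌈u⌉ - 1 := by omega
    simp only [e]
    push_cast
    constructor
    · linarith [Int.ceil_lt_add_one u]
    · linarith [Int.le_ceil u]
  refine (lintegral_mono_set hsub).trans ((lintegral_iUnion_le _ _).trans ?_)
  rw [tsum_fintype]
  simp only [xshift f hf]
  simp

section
set_option linter.unusedSectionVars false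
variable {E : Type*} [NormedAddCommGroup E] [InnerProductSpace ℝ E]

noncomputable def xH (T : ℝ → E) (q β s z : ℝ) : ℝ≥0∞ :=
  ∫⁻ u, if |u - s| ≤ 3 * |z| ∧ |z| ≤ 1 then
    ENNReal.ofReal (|z| ^ (-β - 1)) * ENNReal.ofReal (‖T s - T u‖ ^ (2 * q)) else 0

lemma xHmeas0 {T : ℝ → E} (hT : Continuous T) (q β : ℝ) (hq : 1 ≤ q) :
    Measurable (fun x : (ℝ × ℝ) × ℝ => if |x.2 - x.1.1| ≤ 3 * |x.1.2| ∧ |x.1.2| ≤ 1 then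
    ENNReal.ofReal (|x.1.2| ^ (-β - 1)) * ENNReal.ofReal (‖T x.1.1 - T x.2‖ ^ (2 * q)) else 0) := by
  have hc : Continuous fun x : (ℝ × ℝ) × ℝ => ‖T x.1.1 - T x.2‖ ^ (2 * q) :=
      (by fun_prop : Continuous fun x : (ℝ × ℝ) × ℝ => ‖T x.1.1 - T x.2‖).rpow_const
        (fun _ => Or.inr (by linarith))
  refine Measurable.ite ?_ ?_ measurable_const
  · exact (measurableSet_le (f := fun x : (ℝ × ℝ) × ℝ => |x.2 - x.1.1|)
      (g := fun x : (ℝ × ℝ) × ℝ => 3 * |x.1.2|) (by fun_prop) (by fun_prop)).inter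
      (measurableSet_le (f := fun x : (ℝ × ℝ) × ℝ => |x.1.2|) (by fun_prop) measurable_const)
  · exact Measurable.mul (by fun_prop) hc.measurable.ennreal_ofReal

lemma xHmeas {T : ℝ → E} (hT : Continuous T) (q β : ℝ) (hq : 1 ≤ q) :
    Measurable (fun x : ℝ × ℝ => xH T q β x.1 x.2) := by
  unfold xH
  exact (xHmeas0 hT q β hq).lintegral_prod_right'

lemma xHbound {T : ℝ → E} (hT : Continuous T) (hpT : Function.Periodic T 1) (q β : ℝ) (hq : 1 ≤ q)
    (hβ : 0 < β) (s : ℝ) (hs : s ∈ Set.Ioc (0:ℝ) 1) :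
    ∫⁻ z, xH T q β s z ≤ ENNReal.ofReal (2 / β * 3 ^ β) * (8 * ∫⁻ u in Set.Ioc (0:ℝ) 1,
      ENNReal.ofReal (‖T s - T u‖ ^ (2 * q) / iDist 1 u s ^ β)) := by
  have hTk : ∀ u (k : ℤ), T (u + k) = T u := fun u k => by
    have := hpT.zsmul k u; simpa using this
  unfold xH
  rw [lintegral_lintegral_swap]
  swap
  · exact ((xHmeas0 hT q β hq).comp (f := fun x : ℝ × ℝ => ((s, x.1), x.2)) (by fun_prop)).aemeasurable
  have hpt : ∀ u : ℝ, (∫⁻ z : ℝ, if |u - s| ≤ 3 * |z| ∧ |z| ≤ 1 then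
      ENNReal.ofReal (|z| ^ (-β - 1)) * ENNReal.ofReal (‖T s - T u‖ ^ (2 * q)) else 0) ≤
      (Set.Ioc (-4:ℝ) 4).indicator (fun u => ENNReal.ofReal (2 / β * 3 ^ β) *
        ENNReal.ofReal (‖T s - T u‖ ^ (2 * q) / iDist 1 u s ^ β)) u := by
    intro u
    by_cases hu : u ∈ Set.Ioc (-4:ℝ) 4
    swap
    · rw [Set.indicator_of_notMem hu, nonpos_iff_eq_zero, lintegral_eq_zero_iff']
      · refine Eventually.of_forall fun z => ?_
        refine if_neg ?_
        rintro ⟨h1, h2⟩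
        apply hu
        have := abs_le.1 (h1.trans (by linarith : 3 * |z| ≤ 3))
        constructor <;> linarith [hs.1, hs.2]
      · exact ((xHmeas0 hT q β hq).comp (f := fun z : ℝ => ((s, z), u)) (by fun_prop)).aemeasurable
    rw [Set.indicator_of_mem hu]
    by_cases h0 : iDist 1 u s = 0
    · obtain ⟨k, rfl⟩ := xiD_zero h0
      rw [hTk, sub_self, norm_zero, Real.zero_rpow (by linarith)]
      simp
    have hD : 0 < iDist 1 u s := lt_of_le_of_ne (xiD_nonneg _ _) (Ne.symm h0)
    have hus : 0 < |u - s| := hD.trans_le (xiD_le _ _)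
    set W := ‖T s - T u‖ ^ (2 * q) with hW
    have hW0 : 0 ≤ W := by positivity
    calc _ ≤ ∫⁻ z : ℝ, ENNReal.ofReal W *
          (if |u - s| / 3 ≤ |z| then ENNReal.ofReal (|z| ^ (-β - 1)) else 0) := by
          apply lintegral_mono; intro z
          by_cases h : |u - s| ≤ 3 * |z| ∧ |z| ≤ 1
          · simp only [h, and_self, if_true]
            rw [if_pos (by linarith [h.1]), mul_comm]
          · simp only [h, if_false]; exact zero_le
      _ = ENNReal.ofReal W * ∫⁻ z : ℝ,
          (if |u - s| / 3 ≤ |z| then ENNReal.ofReal (|z| ^ (-β - 1)) else 0) :=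
          lintegral_const_mul' _ _ ENNReal.ofReal_ne_top
      _ ≤ ENNReal.ofReal W * ENNReal.ofReal (2 / β * (|u - s| / 3) ^ (-β)) := by
          gcongr; exact xzint β _ hβ (by positivity)
      _ ≤ _ := by
          rw [← ENNReal.ofReal_mul hW0, ← ENNReal.ofReal_mul (by positivity)]
          apply ENNReal.ofReal_le_ofReal
          rw [Real.div_rpow hus.le (by norm_num), Real.rpow_neg hus.le, Real.rpow_neg (by norm_num)]
          have : (|u - s| ^ β)⁻¹ ≤ (iDist 1 u s ^ β)⁻¹ := by
            gcongr; exact xiD_le _ _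
          have h3 : (0:ℝ) < 3 ^ β := by positivity
          calc _ = 2 / β * 3 ^ β * W * (|u - s| ^ β)⁻¹ := by field_simp
            _ ≤ 2 / β * 3 ^ β * W * (iDist 1 u s ^ β)⁻¹ := by gcongr
            _ = _ := by rw [div_eq_mul_inv W]; ring
  refine (lintegral_mono hpt).trans ?_
  rw [lintegral_indicator measurableSet_Ioc, lintegral_const_mul' _ _ ENNReal.ofReal_ne_top]
  gcongr
  exact xcover _ fun u k => by rw [hTk, xiD_add]

lemma xHfin {T : ℝ → E} (hT : Continuous T) (hpT : Function.Periodic T 1) (q β : ℝ) (hq : 1 ≤ q)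
    (hβ : 0 < β) (hsob : (∫⁻ t in Set.Ioc (0 : ℝ) 1, ∫⁻ s in Set.Ioc (0 : ℝ) 1,
        ENNReal.ofReal (‖T t - T s‖ ^ (2 * q) / iDist 1 s t ^ β)) < ⊤) (k : ℝ) :
    ∫⁻ x : ℝ × ℝ, xH T q β x.1 (x.2 + k - x.1)
      ∂((volume.restrict (Set.Ioc (0:ℝ) 1)).prod (volume.restrict (Set.Ioc (0:ℝ) 1))) < ⊤ := by
  have hm : Measurable fun x : ℝ × ℝ => xH T q β x.1 (x.2 + k - x.1) :=
    (xHmeas hT q β hq).comp (f := fun x : ℝ × ℝ => (x.1, x.2 + k - x.1)) (by fun_prop)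
  rw [lintegral_prod _ hm.aemeasurable]
  refine lt_of_le_of_lt (setLIntegral_mono' measurableSet_Ioc
    (g := fun s => ENNReal.ofReal (2 / β * 3 ^ β) * (8 * ∫⁻ u in Set.Ioc (0:ℝ) 1,
      ENNReal.ofReal (‖T s - T u‖ ^ (2 * q) / iDist 1 u s ^ β))) fun s hs => ?_) ?_
  · refine (setLIntegral_le_lintegral _ _).trans ?_
    have := lintegral_add_right_eq_self (μ := volume) (fun z => xH T q β s z) (k - s)
    simp only [add_sub_assoc]
    rw [this]
    exact xHbound hT hpT q β hq hβ s hs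
  · rw [lintegral_const_mul' _ _ ENNReal.ofReal_ne_top, lintegral_const_mul' _ _ (by simp)]
    exact ENNReal.mul_lt_top ENNReal.ofReal_lt_top (ENNReal.mul_lt_top (by simp) hsob)

end


noncomputable def xF {E : Type*} [NormedAddCommGroup E] [InnerProductSpace ℝ E]
    (p : ℝ → E) (n : ℕ) (α q : ℝ) (i j : ℤ) : ℝ :=
  if i = j then 0 else (‖p ((j : ℝ) / n) - p ((i : ℝ) / n)‖ ^ (-α) -
                    (((min |j - i| ((n : ℤ) - |j - i|) : ℤ) : ℝ) / n) ^ (-α)) ^ q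

section
set_option linter.unusedSectionVars false
variable {E : Type*} [NormedAddCommGroup E] [InnerProductSpace ℝ E]

lemma xM2core {T : ℝ → E} (hT : Continuous T) (C q β X x z l r : ℝ) (hq : 1 ≤ q)
    (hβ : 0 < β) (hC : 0 ≤ C)
    (hX : 0 < X) (hz : 0 < |z|) (hz1 : |z| ≤ 1) (hzX : |z| ≤ 3 / 2 * X) (hlr : l ≤ r)
    (hu : ∀ u ∈ Set.Ioc l r, |u - x| ≤ 3 * |z|) :
    ENNReal.ofReal (C * (X ^ (-β - 1) * ∫ u in l..r, ‖T x - T u‖ ^ (2 * q))) ≤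
      ENNReal.ofReal (C * (2 / 3) ^ (-β - 1)) * xH T q β x z := by
  have hc : Continuous fun u => ‖T x - T u‖ ^ (2 * q) :=
      (by fun_prop : Continuous fun u => ‖T x - T u‖).rpow_const (fun _ => Or.inr (by linarith))
  have hJ0 : 0 ≤ ∫ u in l..r, ‖T x - T u‖ ^ (2 * q) :=
    intervalIntegral.integral_nonneg hlr fun u _ => by positivity
  have h1 : X ^ (-β - 1) ≤ (2 / 3) ^ (-β - 1) * |z| ^ (-β - 1) := by
    rw [← Real.mul_rpow (by norm_num) hz.le]
    exact Real.rpow_le_rpow_of_nonpos (by positivity) (by linarith) (by linarith)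
  have h2 : ENNReal.ofReal (|z| ^ (-β - 1)) * ENNReal.ofReal (∫ u in l..r, ‖T x - T u‖ ^ (2 * q))
      ≤ xH T q β x z := by
    rw [intervalIntegral.integral_of_le hlr, ofReal_integral_eq_lintegral_ofReal hc.integrableOn_Ioc
      (Eventually.of_forall fun u => by positivity), ← lintegral_const_mul' _ _ ENNReal.ofReal_ne_top,
      ← lintegral_indicator measurableSet_Ioc]
    unfold xH
    apply lintegral_mono
    intro u
    by_cases h : u ∈ Set.Ioc l r
    · simp only [Set.indicator_of_mem h]
      rw [if_pos ⟨hu u h, hz1⟩]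
    · simp only [Set.indicator_of_notMem h]; exact zero_le
  calc _ ≤ ENNReal.ofReal ((C * (2 / 3) ^ (-β - 1)) * (|z| ^ (-β - 1) * ∫ u in l..r, ‖T x - T u‖ ^ (2 * q))) := by
        apply ENNReal.ofReal_le_ofReal
        calc _ ≤ C * (((2 / 3) ^ (-β - 1) * |z| ^ (-β - 1)) * ∫ u in l..r, ‖T x - T u‖ ^ (2 * q)) := by
              gcongr
          _ = _ := by ring
    _ = ENNReal.ofReal (C * (2 / 3) ^ (-β - 1)) * (ENNReal.ofReal (|z| ^ (-β - 1)) *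
        ENNReal.ofReal (∫ u in l..r, ‖T x - T u‖ ^ (2 * q))) := by
        rw [ENNReal.ofReal_mul (p := C * (2/3)^(-β-1)) (by positivity), ENNReal.ofReal_mul (p := |z|^(-β-1)) (by positivity)]
    _ ≤ _ := by gcongr

lemma xM2 [CompleteSpace E] {γ T : ℝ → E} (hd : ∀ s, HasDerivAt γ (T s) s) (hT : Continuous T)
    (hnT : ∀ s, ‖T s‖ = 1)
    (n : ℕ) (hn : 0 < n) (p : ℝ → E) (B : ℤ → E) (hper : Function.Periodic p 1)
    (haff : ∀ i : ℤ, ∀ u ∈ Set.Icc ((i:ℝ) / n) (((i:ℝ) + 1) / n),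
      p u = p ((i:ℝ)/n) + (u - (i:ℝ)/n) • B i)
    (c : E) (hc : ‖c‖ ≤ 1 / 2) (hne : ∀ k, xav γ n k + c ≠ 0) (hBd : ∀ k, B k = xun (xav γ n k + c))
    (κ : ℝ) (hκ : 0 < κ)
    (hlow : ∀ (a : ℤ) (m : ℕ), 2 * m ≤ n →
      κ * ((m:ℝ) / n) ≤ ‖p (((a + m : ℤ) : ℝ) / n) - p ((a:ℝ) / n)‖)
    (α q : ℝ) (hα : 0 < α) (hq : 1 ≤ q) (x y : ℝ) (hx : x ∈ Set.Ioc (0:ℝ) 1)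
    (hy : y ∈ Set.Ioc (0:ℝ) 1) :
    0 ≤ xF p n α q ⌈(n:ℝ) * x⌉ ⌈(n:ℝ) * y⌉ ∧
    ENNReal.ofReal (xF p n α q ⌈(n:ℝ) * x⌉ ⌈(n:ℝ) * y⌉) ≤
      ENNReal.ofReal (((κ ^ (-α) * max α 1) ^ q * 4 ^ (2 * q)) * (2 / 3) ^ (-(α * q) - 1)) *
        (xH T q (α * q) x (y + 0 - x) + xH T q (α * q) x (y + 1 - x) +
          xH T q (α * q) x (y + (-1) - x)) := by
  have hn' : (0 : ℝ) < n := by exact_mod_cast hn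
  have hB : ∀ k, ‖B k‖ = 1 := fun k => by rw [hBd]; exact xun_norm (hne k)
  set i := ⌈(n:ℝ) * x⌉ with hi
  set j := ⌈(n:ℝ) * y⌉ with hj
  have i1 := Int.le_ceil ((n:ℝ) * x)
  have i2 := Int.ceil_lt_add_one ((n:ℝ) * x)
  have j1 := Int.le_ceil ((n:ℝ) * y)
  have j2 := Int.ceil_lt_add_one ((n:ℝ) * y)
  rw [← hi] at i1 i2
  rw [← hj] at j1 j2
  have ib1 : 1 ≤ i := Int.one_le_ceil_iff.2 (mul_pos hn' hx.1)
  have ib2 : i ≤ n := Int.ceil_le.2 (by push_cast; nlinarith [hx.2])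
  have jb1 : 1 ≤ j := Int.one_le_ceil_iff.2 (mul_pos hn' hy.1)
  have jb2 : j ≤ n := Int.ceil_le.2 (by push_cast; nlinarith [hy.2])
  clear_value i j
  by_cases hij : i = j
  · simp [xF, hij]
  obtain ⟨k, m, hk, hm0, hm2, hmin, hbm⟩ : ∃ (k : ℤ) (m : ℕ), (k = 0 ∨ k = 1 ∨ k = -1) ∧ 0 < m ∧
      2 * m ≤ n ∧ min |j - i| ((n : ℤ) - |j - i|) = m ∧
      (j + k * n = i + m ∨ i = (j + k * n) + m) := by
    rcases lt_or_gt_of_ne hij with h | h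
    · rw [abs_of_pos (by omega)]
      by_cases h2 : 2 * (j - i) ≤ n
      · exact ⟨0, (j - i).toNat, by omega, by omega, by omega, by omega, by omega⟩
      · exact ⟨-1, (n - (j - i)).toNat, by omega, by omega, by omega, by omega, by omega⟩
    · rw [abs_of_neg (by omega)]
      by_cases h2 : 2 * (i - j) ≤ n
      · exact ⟨0, (i - j).toNat, by omega, by omega, by omega, by omega, by omega⟩
      · exact ⟨1, (n - (i - j)).toNat, by omega, by omega, by omega, by omega, by omega⟩
  have hm' : (0 : ℝ) < m := by exact_mod_cast hm0
  have hm2' : 2 * (m:ℝ) ≤ n := by exact_mod_cast hm2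
  have hpj : p ((j:ℝ) / n) = p (((j + k * n : ℤ) : ℝ) / n) := by
    have := hper.zsmul k ((j:ℝ) / n)
    rw [← this]; congr 1; push_cast; field_simp; simp
  obtain ⟨a, hnorm, haI⟩ : ∃ a : ℤ, ‖p ((j:ℝ) / n) - p ((i:ℝ) / n)‖ =
      ‖p (((a + m : ℤ) : ℝ) / n) - p ((a:ℝ) / n)‖ ∧
      ((a = i ∧ a + m = j + k * n) ∨ (a + m = i ∧ a = j + k * n)) := by
    rcases hbm with h | h
    · exact ⟨i, by rw [hpj, h], Or.inl ⟨rfl, h.symm⟩⟩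
    · exact ⟨j + k * n, by rw [hpj, ← h, norm_sub_rev], Or.inr ⟨h.symm, rfl⟩⟩
  have hFe : xF p n α q i j = (‖p (((a + m : ℤ) : ℝ) / n) - p ((a:ℝ) / n)‖ ^ (-α) -
      ((m:ℝ) / n) ^ (-α)) ^ q := by
    unfold xF
    rw [if_neg hij, hnorm, hmin, Int.cast_natCast]
  rw [hFe]
  obtain ⟨hb0, hb1⟩ := xM1 hd hT hnT n m hn hm0 a p B haff c hc hne hBd κ hκ (hlow a m hm2) α q hα hq x
  refine ⟨Real.rpow_nonneg hb0 _, ?_⟩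
  rcases (Nat.succ_le_of_lt hm0).eq_or_lt with hm1 | hm1
  · have hm1 : m = 1 := hm1.symm
    subst hm1
    have : ‖p (((a + (1:ℕ) : ℤ) : ℝ) / n) - p ((a:ℝ) / n)‖ = ((1:ℕ):ℝ) / n := by
      rw [xdiff n hn p B haff a 1]; simp [norm_smul, hB]
    rw [this, sub_self, Real.zero_rpow (by linarith)]
    simp
  have hm2r : (2:ℝ) ≤ m := by exact_mod_cast hm1
  refine (ENNReal.ofReal_le_ofReal hb1).trans ?_
  have hz : ∀ z : ℝ, z = y + k - x → ENNReal.ofReal (((κ ^ (-α) * max α 1) ^ q * 4 ^ (2 * q)) * (((m:ℝ) / n) ^ (-(α * q) - 1) *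
        ∫ u in ((a:ℝ)/n)..(((a + m : ℤ) : ℝ) / n), ‖T x - T u‖ ^ (2 * q))) ≤
        ENNReal.ofReal (((κ ^ (-α) * max α 1) ^ q * 4 ^ (2 * q)) * (2 / 3) ^ (-(α * q) - 1)) *
        xH T q (α * q) x z := by
    intro z hz
    have hnz : (n:ℝ) * |z| = |(n:ℝ) * y + k * n - n * x| := by
      rw [← abs_of_pos hn', ← abs_mul, abs_of_pos hn', hz]; congr 1; ring
    have hA : (m:ℝ) - 1 ≤ n * |z| ∧ n * |z| ≤ m + 1 ∧
        ∀ u ∈ Set.Ioc ((a:ℝ)/n) (((a + m : ℤ) : ℝ) / n), |n * u - n * x| ≤ m + 1 := by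
      rw [hnz]
      rcases haI with ⟨h1, h2⟩ | ⟨h1, h2⟩
      · have h1' : (a:ℝ) = i := by exact_mod_cast h1
        have h2' : (a:ℝ) + m = j + k * n := by exact_mod_cast h2
        refine ⟨le_trans (by linarith) (le_abs_self _), abs_le.2 ⟨by linarith, by linarith⟩, ?_⟩
        intro u hu
        have u1 := hu.1; have u2 := hu.2
        rw [div_lt_iff₀ hn'] at u1
        rw [le_div_iff₀ hn'] at u2
        push_cast at u2
        rw [abs_le]; constructor <;> linarith
      · have h1' : (a:ℝ) + m = i := by exact_mod_cast h1
        have h2' : (a:ℝ) = j + k * n := by exact_mod_cast h2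
        refine ⟨le_trans (by linarith) (neg_le_abs _), abs_le.2 ⟨by linarith, by linarith⟩, ?_⟩
        intro u hu
        have u1 := hu.1; have u2 := hu.2
        rw [div_lt_iff₀ hn'] at u1
        rw [le_div_iff₀ hn'] at u2
        push_cast at u2
        rw [abs_le]; constructor <;> linarith
    obtain ⟨hA1, hA2, hA3⟩ := hA
    have hz0 : 0 < |z| := by
      by_contra! h
      nlinarith [mul_nonneg hn'.le (neg_nonneg.2 h)]
    refine xM2core hT _ q (α * q) ((m:ℝ)/n) x z _ _ hq (by positivity) (by positivity) (by positivity) hz0 ?_ ?_ ?_ ?_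
    · by_contra! h; nlinarith
    · rw [← mul_div_assoc, le_div_iff₀ hn']; linarith
    · gcongr; push_cast; linarith
    · intro u hu
      have := hA3 u hu
      rw [← mul_sub, abs_mul, abs_of_pos hn'] at this
      by_contra! h
      nlinarith
  have hle := hz _ rfl
  refine hle.trans ?_
  gcongr
  rcases hk with rfl | rfl | rfl
  · refine le_trans ?_ le_self_add
    refine le_trans ?_ le_self_add
    simp
  · refine le_trans ?_ le_self_add
    refine le_trans ?_ le_add_self
    simp
  · refine le_trans ?_ le_add_self
    simp

lemma xceil_tendsto (x : ℝ) : Tendsto (fun n : ℕ => (⌈(n:ℝ) * x⌉ : ℝ) / n) atTop (nhds x) := by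
  have h1 : Tendsto (fun n : ℕ => x + 1 / (n:ℝ)) atTop (nhds x) := by
    simpa using tendsto_one_div_atTop_nhds_zero_nat.const_add x
  refine tendsto_of_tendsto_of_tendsto_of_le_of_le' tendsto_const_nhds h1 ?_ ?_
  · filter_upwards [eventually_gt_atTop 0] with n hn
    have hn' : (0 : ℝ) < n := by exact_mod_cast hn
    rw [le_div_iff₀ hn']; linarith [Int.le_ceil ((n:ℝ) * x)]
  · filter_upwards [eventually_gt_atTop 0] with n hn
    have hn' : (0 : ℝ) < n := by exact_mod_cast hn
    rw [div_le_iff₀ hn', add_mul, one_div, inv_mul_cancel₀ hn'.ne']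
    linarith [Int.ceil_lt_add_one ((n:ℝ) * x)]

lemma xconv {γ : ℝ → E} (hγ : Continuous γ) (hp : Function.Periodic γ 1)
    (hinj : Set.InjOn γ (Set.Ico (0 : ℝ) 1)) (p : ℕ → ℝ → E)
    (hpc : ∀ ε > 0, ∀ᶠ n : ℕ in atTop, ∀ u, ‖p n u - γ u‖ ≤ ε)
    (α q : ℝ) (hq : 1 ≤ q) (x y : ℝ) (hx : x ∈ Set.Ioc (0:ℝ) 1) (hy : y ∈ Set.Ioc (0:ℝ) 1) :
    Tendsto (fun n : ℕ => xF (p n) n α q ⌈(n:ℝ) * x⌉ ⌈(n:ℝ) * y⌉) atTop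
      (nhds ((‖γ x - γ y‖ ^ (-α) - iDist 1 y x ^ (-α)) ^ q)) := by
  by_cases hxy : x = y
  · subst hxy
    have h0 : iDist 1 x x = 0 := by rw [xiD_min x x hx hx]; simp
    have : ((‖γ x - γ x‖ ^ (-α) - iDist 1 x x ^ (-α)) ^ q) = 0 := by
      rw [h0, sub_self, norm_zero, sub_self, Real.zero_rpow (by linarith)]
    rw [this]
    simp [xF]
  have hxy1 : 0 < |y - x| := abs_pos.2 (sub_ne_zero.2 (Ne.symm hxy))
  have hxy2 : |y - x| < 1 := by
    rw [abs_lt]; constructor <;> linarith [hx.1, hx.2, hy.1, hy.2]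
  have hγxy : ‖γ y - γ x‖ ≠ 0 := by
    rw [norm_ne_zero_iff, sub_ne_zero]
    intro h
    obtain ⟨k, hk⟩ := xinj hp hinj h
    rw [hk] at hxy1 hxy2
    have h1 : 0 < |k| := by exact_mod_cast hxy1
    have h2 : |k| < 1 := by exact_mod_cast hxy2
    omega
  have hX := xceil_tendsto x
  have hY := xceil_tendsto y
  have hpt : ∀ w : ℝ, Tendsto (fun n : ℕ => p n ((⌈(n:ℝ) * w⌉ : ℝ) / n)) atTop (nhds (γ w)) := by
    intro w
    have h1 : Tendsto (fun n : ℕ => p n ((⌈(n:ℝ) * w⌉ : ℝ) / n) - γ ((⌈(n:ℝ) * w⌉ : ℝ) / n)) atTop (nhds 0) := by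
      rw [Metric.tendsto_nhds]
      intro ε hε
      filter_upwards [hpc (ε/2) (by positivity)] with n hn
      rw [dist_zero_right]; exact (hn _).trans_lt (by linarith)
    have h2 := (hγ.tendsto w).comp (xceil_tendsto w)
    simpa using h1.add h2
  have hD : Tendsto (fun n : ℕ => (((min |⌈(n:ℝ) * y⌉ - ⌈(n:ℝ) * x⌉| ((n : ℤ) - |⌈(n:ℝ) * y⌉ - ⌈(n:ℝ) * x⌉|) : ℤ) : ℝ) / n))
      atTop (nhds (iDist 1 y x)) := by
    rw [xiD_min y x hy hx, abs_sub_comm x y]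
    have h1 := (hY.sub hX).abs
    have h2 := h1.min (h1.const_sub 1)
    refine h2.congr' ?_
    filter_upwards [eventually_gt_atTop 0] with n hn
    have hn' : (0 : ℝ) < n := by exact_mod_cast hn
    push_cast
    rw [← min_div_div_right hn'.le, ← sub_div, abs_div, abs_of_pos hn', sub_div, div_self hn'.ne']
  have hD0 : iDist 1 y x ≠ 0 := by
    rw [xiD_min y x hy hx, abs_sub_comm x y]
    exact (lt_min hxy1 (by linarith)).ne'
  rw [norm_sub_rev]
  have hmain := ((((hpt y).sub (hpt x)).norm.rpow_const (p := -α) (Or.inl hγxy)).sub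
    (hD.rpow_const (p := -α) (Or.inl hD0))).rpow_const (p := q) (Or.inr (by linarith))
  refine hmain.congr' ?_
  have hev : ∀ᶠ n : ℕ in atTop, (⌈(n:ℝ) * x⌉ : ℝ) / n ≠ (⌈(n:ℝ) * y⌉ : ℝ) / n := by
    have := (hX.sub hY).eventually_ne (sub_ne_zero.2 hxy)
    filter_upwards [this] with n hn
    exact sub_ne_zero.1 hn
  filter_upwards [hev] with n hn
  unfold xF
  rw [if_neg]
  intro h; rw [h] at hn; exact hn rfl

end


section
set_option linter.unusedSectionVars false
variable {E : Type*} [NormedAddCommGroup E] [InnerProductSpace ℝ E]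

lemma xenergy {γ T : ℝ → E} (hγ : Continuous γ) (hT : Continuous T) (hp : Function.Periodic γ 1)
    (hpT : Function.Periodic T 1)
    (hinj : Set.InjOn γ (Set.Ico (0 : ℝ) 1)) (p : ℕ → ℝ → E)
    (hpc : ∀ ε > 0, ∀ᶠ n : ℕ in atTop, ∀ u, ‖p n u - γ u‖ ≤ ε)
    (α q : ℝ) (hα : 0 < α) (hq : 1 ≤ q)
    (hsob : (∫⁻ t in Set.Ioc (0 : ℝ) 1, ∫⁻ s in Set.Ioc (0 : ℝ) 1,
        ENNReal.ofReal (‖T t - T s‖ ^ (2 * q) / iDist 1 s t ^ (α * q))) < ⊤)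
    (K : ℝ≥0∞) (hK : K ≠ ⊤)
    (hdom : ∀ᶠ n : ℕ in atTop, ∀ x ∈ Set.Ioc (0:ℝ) 1, ∀ y ∈ Set.Ioc (0:ℝ) 1,
      0 ≤ xF (p n) n α q ⌈(n:ℝ) * x⌉ ⌈(n:ℝ) * y⌉ ∧
      ENNReal.ofReal (xF (p n) n α q ⌈(n:ℝ) * x⌉ ⌈(n:ℝ) * y⌉) ≤ K *
        (xH T q (α * q) x (y + 0 - x) + xH T q (α * q) x (y + 1 - x) +
          xH T q (α * q) x (y + (-1) - x))) :
    Tendsto (fun n : ℕ => (1 / (α * (n : ℝ) ^ 2)) *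
      ∑ i ∈ Finset.Icc (1 : ℤ) (n : ℤ), ∑ j ∈ Finset.Icc (1 : ℤ) (n : ℤ), xF (p n) n α q i j)
      atTop (nhds ((1 / α) * ∫ t in Set.Ioc (0 : ℝ) 1, ∫ s in Set.Ioc (0 : ℝ) 1,
        (‖γ t - γ s‖ ^ (-α) - iDist 1 s t ^ (-α)) ^ q)) := by
  set μ := (volume.restrict (Set.Ioc (0:ℝ) 1)).prod (volume.restrict (Set.Ioc (0:ℝ) 1)) with hμ
  set G : ℝ × ℝ → ℝ≥0∞ := fun z => K *
        (xH T q (α * q) z.1 (z.2 + 0 - z.1) + xH T q (α * q) z.1 (z.2 + 1 - z.1) +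
          xH T q (α * q) z.1 (z.2 + (-1) - z.1)) with hG
  have hm : ∀ k : ℝ, Measurable fun x : ℝ × ℝ => xH T q (α * q) x.1 (x.2 + k - x.1) := fun k =>
    (xHmeas hT q (α * q) hq).comp (f := fun x : ℝ × ℝ => (x.1, x.2 + k - x.1)) (by fun_prop)
  have hGm : Measurable G := (((hm 0).add (hm 1)).add (hm (-1))).const_mul K
  have hGf : ∫⁻ z, G z ∂μ ≠ ⊤ := by
    have hfin := fun k => xHfin hT hpT q (α * q) hq (by positivity) hsob k
    rw [hG, lintegral_const_mul' _ _ hK, lintegral_add_right _ (hm (-1)),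
      lintegral_add_left (hm 0)]
    exact ENNReal.mul_ne_top hK (ENNReal.add_ne_top.2 ⟨ENNReal.add_ne_top.2
      ⟨(hfin 0).ne, (hfin 1).ne⟩, (hfin (-1)).ne⟩)
  have hGi : Integrable (fun z => (G z).toReal) μ :=
    integrable_toReal_of_lintegral_ne_top hGm.aemeasurable hGf
  have hGa : ∀ᵐ z ∂μ, G z < ⊤ := ae_lt_top hGm hGf
  have hmem : ∀ᵐ z ∂μ, z.1 ∈ Set.Ioc (0:ℝ) 1 ∧ z.2 ∈ Set.Ioc (0:ℝ) 1 := by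
    rw [hμ, Measure.prod_restrict]
    filter_upwards [ae_restrict_mem (measurableSet_Ioc.prod measurableSet_Ioc)] with z hz
    exact hz
  set f : ℕ → ℝ × ℝ → ℝ := fun n z => xF (p n) n α q ⌈(n:ℝ) * z.1⌉ ⌈(n:ℝ) * z.2⌉ with hf
  have hfm : ∀ n, Measurable (f n) := fun n => by
    have h1 : Measurable fun w : ℤ × ℤ => xF (p n) n α q w.1 w.2 := measurable_of_countable _
    have h2 : Measurable fun z : ℝ × ℝ => (⌈(n:ℝ) * z.1⌉, ⌈(n:ℝ) * z.2⌉) := by fun_prop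
    exact h1.comp h2
  have hfb : ∀ᶠ n in atTop, ∀ᵐ z ∂μ, ‖f n z‖ ≤ (G z).toReal := by
    filter_upwards [hdom] with n hn
    filter_upwards [hGa, hmem] with z hz hz2
    obtain ⟨h1, h2⟩ := hn _ hz2.1 _ hz2.2
    rw [Real.norm_of_nonneg h1]
    exact (ENNReal.ofReal_le_iff_le_toReal hz.ne).1 h2
  have hlim : ∀ᵐ z ∂μ, Tendsto (fun n => f n z) atTop
      (nhds ((‖γ z.1 - γ z.2‖ ^ (-α) - iDist 1 z.2 z.1 ^ (-α)) ^ q)) := by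
    filter_upwards [hmem] with z hz
    exact xconv hγ hp hinj p hpc α q hq z.1 z.2 hz.1 hz.2
  have hmain := tendsto_integral_filter_of_dominated_convergence (fun z => (G z).toReal)
    (Eventually.of_forall fun n => (hfm n).aestronglyMeasurable) hfb hGi hlim
  have hgm : AEStronglyMeasurable (fun z : ℝ × ℝ => (‖γ z.1 - γ z.2‖ ^ (-α) - iDist 1 z.2 z.1 ^ (-α)) ^ q) μ :=
    aestronglyMeasurable_of_tendsto_ae atTop (fun n => (hfm n).aestronglyMeasurable) hlim
  have hgi : Integrable (fun z : ℝ × ℝ => (‖γ z.1 - γ z.2‖ ^ (-α) - iDist 1 z.2 z.1 ^ (-α)) ^ q) μ := by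
    refine hGi.mono' hgm ?_
    obtain ⟨N, hN⟩ := eventually_atTop.1 hfb
    have hall : ∀ᵐ z ∂μ, ∀ n, N ≤ n → ‖f n z‖ ≤ (G z).toReal := by
      rw [ae_all_iff]; intro n
      by_cases h : N ≤ n
      · filter_upwards [hN n h] with z hz _ using hz
      · exact Eventually.of_forall fun z h' => absurd h' h
    filter_upwards [hall, hlim] with z h1 h2
    exact le_of_tendsto h2.norm (eventually_atTop.2 ⟨N, h1⟩)
  rw [integral_prod _ hgi] at hmain
  refine (hmain.const_mul (1 / α)).congr' ?_
  filter_upwards [hfb, eventually_gt_atTop 0] with n hn hn0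
  have hfi : Integrable (f n) μ := hGi.mono' (hfm n).aestronglyMeasurable hn
  rw [integral_prod _ hfi]
  have e1 : ∀ x : ℝ, ∫ y in Set.Ioc (0:ℝ) 1, f n (x, y) =
      (fun i : ℤ => (1 / n : ℝ) * ∑ j ∈ Finset.Icc (1:ℤ) n, xF (p n) n α q i j) ⌈(n:ℝ) * x⌉ := by
    intro x
    exact xceil_sum n hn0 (fun j => xF (p n) n α q ⌈(n:ℝ) * x⌉ j)
  simp_rw [e1]
  rw [xceil_sum n hn0 (fun i : ℤ => (1 / n : ℝ) * ∑ j ∈ Finset.Icc (1:ℤ) n, xF (p n) n α q i j)]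
  rw [← Finset.mul_sum]
  have hn' : (n : ℝ) ≠ 0 := by exact_mod_cast hn0.ne'
  field_simp

lemma xav_per {γ : ℝ → E} (hp : Function.Periodic γ 1) (n : ℕ) (hn : 0 < n) (k : ℤ) :
    xav γ n (k + n) = xav γ n k := by
  have hn' : (n : ℝ) ≠ 0 := by exact_mod_cast hn.ne'
  unfold xav
  have e1 : (((k + n : ℤ) : ℝ) + 1) / n = ((k:ℝ) + 1) / n + 1 := by push_cast; field_simp; ring
  have e2 : (((k + n : ℤ) : ℝ)) / n = ((k:ℝ)) / n + 1 := by push_cast; field_simp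
  rw [e1, e2, hp, hp]

lemma xav_sum (γ : ℝ → E) (n : ℕ) (hn : 0 < n) (a : ℤ) (m : ℕ) :
    γ (((a + m : ℤ) : ℝ) / n) - γ ((a:ℝ) / n) = (1 / n : ℝ) • ∑ k ∈ Finset.range m, xav γ n (a + k) := by
  have hn' : (n : ℝ) ≠ 0 := by exact_mod_cast hn.ne'
  induction m with
  | zero => simp
  | succ m ih =>
    rw [Finset.sum_range_succ, smul_add, ← ih]
    unfold xav
    rw [smul_smul, one_div, inv_mul_cancel₀ hn', one_smul]
    push_cast
    rw [add_assoc]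
    abel

lemma xBclose {γ T : ℝ → E} (hd : ∀ s, HasDerivAt γ (T s) s) (hT : Continuous T)
    (hpT : Function.Periodic T 1) (hn : ∀ s, ‖T s‖ = 1) (c : ℕ → E) (hc : Tendsto c atTop (nhds 0))
    (hne : ∀ᶠ n : ℕ in atTop, ∀ k : ℤ, xav γ n k + c n ≠ 0) :
    ∀ ε > 0, ∀ᶠ n : ℕ in atTop, ∀ k : ℤ, ∀ u ∈ Set.Icc ((k : ℝ) / n) (((k : ℝ) + 1) / n),
      ‖xun (xav γ n k + c n) - T u‖ ≤ ε := by
  intro ε hε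
  have h1 := xav_unif hd hT hpT (ε / 4) (by positivity)
  have h2 : ∀ᶠ n : ℕ in atTop, ‖c n‖ < ε / 4 := by
    have := hc.norm; rw [norm_zero] at this
    exact this.eventually_lt_const (by positivity)
  filter_upwards [h1, h2, hne] with n h1 h2 h3 k u hu
  have hTu : T u ≠ 0 := by rw [← norm_ne_zero_iff, hn]; norm_num
  have e : xun (T u) = T u := by unfold xun; rw [hn]; simp
  have := xun_lip (xav γ n k + c n) (T u) (h3 k) hTu
  rw [e, hn, div_one] at this
  have h4 : ‖xav γ n k + c n - T u‖ ≤ ‖xav γ n k - T u‖ + ‖c n‖ := by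
    rw [add_sub_right_comm]; exact norm_add_le _ _
  have := h1 k u hu
  linarith

lemma xlow {γ T : ℝ → E} (hd : ∀ s, HasDerivAt γ (T s) s)
    (n : ℕ) (hn : 0 < n) (p : ℝ → E) (B : ℤ → E)
    (haff : ∀ i : ℤ, ∀ u ∈ Set.Icc ((i:ℝ) / n) (((i:ℝ) + 1) / n),
      p u = p ((i:ℝ)/n) + (u - (i:ℝ)/n) • B i) (c : ℝ)
    (hbi : ∀ s z : ℝ, 0 ≤ z → z ≤ 1 / 2 → c * z ≤ ‖γ (s + z) - γ s‖)
    (hcl : ∀ k : ℤ, ∀ u ∈ Set.Icc ((k : ℝ) / n) (((k : ℝ) + 1) / n), ‖B k - T u‖ ≤ c / 2)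
    (a : ℤ) (m : ℕ) (hm : 2 * m ≤ n) :
    c / 2 * ((m:ℝ) / n) ≤ ‖p (((a + m : ℤ) : ℝ) / n) - p ((a:ℝ) / n)‖ := by
  have hn' : (0 : ℝ) < n := by exact_mod_cast hn
  have hm' : 2 * (m:ℝ) ≤ n := by exact_mod_cast hm
  have h1 := hbi ((a:ℝ)/n) ((m:ℝ)/n) (by positivity) (by rw [div_le_iff₀ hn']; linarith)
  have e : (a:ℝ)/n + (m:ℝ)/n = ((a + m : ℤ) : ℝ) / n := by push_cast; ring
  rw [e] at h1
  have h2 : ‖(γ (((a + m : ℤ) : ℝ) / n) - γ ((a:ℝ) / n)) - (p (((a + m : ℤ) : ℝ) / n) - p ((a:ℝ) / n))‖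
      ≤ c / 2 * ((m:ℝ) / n) := by
    rw [xav_sum γ n hn, xdiff n hn p B haff, ← smul_sub, ← Finset.sum_sub_distrib, norm_smul,
      Real.norm_of_nonneg (by positivity)]
    have : ‖∑ k ∈ Finset.range m, (xav γ n (a + k) - B (a + k))‖ ≤ ∑ k ∈ Finset.range m, c / 2 := by
      refine norm_sum_le_of_le _ fun k _ => ?_
      refine xav_close hd n hn _ _ _ fun u hu => ?_
      rw [norm_sub_rev]; exact hcl _ u hu
    rw [Finset.sum_const, Finset.card_range, nsmul_eq_mul] at this
    calc _ ≤ 1 / (n:ℝ) * (m * (c / 2)) := by gcongr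
      _ = _ := by ring
  have h3 := norm_sub_norm_le (γ (((a + m : ℤ) : ℝ) / n) - γ ((a:ℝ) / n)) (p (((a + m : ℤ) : ℝ) / n) - p ((a:ℝ) / n))
  linarith

end

theorem stmt15 (d : ℕ) (hd : 2 ≤ d) (α q σ : ℝ) (hα : 0 < α) (hq : 1 ≤ q)
    (hαq1 : 2 ≤ α * q) (hαq2 : α * q < 2 * q + 1) (hσ : σ = (α * q - 1) / (2 * q))
    (γ : ℝ → EuclideanSpace ℝ (Fin d))
    (hper : Function.Periodic γ 1)
    (hinj : Set.InjOn γ (Set.Ico (0 : ℝ) 1))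
    (hC1 : ContDiff ℝ 1 γ)
    (hspeed : ∀ s : ℝ, ‖deriv γ s‖ = 1)
    (hsob : (∫⁻ t in Set.Ioc (0 : ℝ) 1, ∫⁻ s in Set.Ioc (0 : ℝ) 1,
        ENNReal.ofReal
          (‖deriv γ t - deriv γ s‖ ^ (2 * q) / iDist 1 s t ^ (1 + 2 * q * σ))) < ⊤) :
    ∃ (p : ℕ → ℝ → EuclideanSpace ℝ (Fin d)) (t₀ : ℕ → ℝ)
      (B : ℕ → ℤ → EuclideanSpace ℝ (Fin d)),
      (∀ n : ℕ, 3 ≤ n → Function.Periodic (p n) 1 ∧ ∀ i : ℤ, ‖B n i‖ = 1 ∧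
        ∀ u ∈ Set.Icc (t₀ n + (i : ℝ) / n) (t₀ n + ((i : ℝ) + 1) / n),
          p n u = p n (t₀ n + (i : ℝ) / n) + (u - (t₀ n + (i : ℝ) / n)) • B n i) ∧
      (∀ ε : ℝ, 0 < ε → ∃ N : ℕ, ∀ n : ℕ, N ≤ n →
        (∀ u : ℝ, ‖p n u - γ u‖ ≤ ε) ∧
        (∀ i : ℤ, ∀ u ∈ Set.Icc (t₀ n + (i : ℝ) / n) (t₀ n + ((i : ℝ) + 1) / n),
          ‖B n i - deriv γ u‖ ≤ ε)) ∧
      Filter.Tendsto (fun n : ℕ =>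
          (1 / (α * (n : ℝ) ^ 2)) *
            ∑ i ∈ Finset.Icc (1 : ℤ) (n : ℤ), ∑ j ∈ Finset.Icc (1 : ℤ) (n : ℤ),
              (if i = j then 0 else
                (‖p n (t₀ n + (j : ℝ) / n) - p n (t₀ n + (i : ℝ) / n)‖ ^ (-α) -
                    (((min |j - i| ((n : ℤ) - |j - i|) : ℤ) : ℝ) / n) ^ (-α)) ^ q))
        Filter.atTop (nhds (oharaE d α q 1 γ)) := by
  have hα' := hα
  have hdγ : ∀ s, HasDerivAt γ (deriv γ s) s := fun s =>
    (hC1.differentiable (by norm_num) s).hasDerivAt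
  have hT : Continuous (deriv γ) := hC1.continuous_deriv le_rfl
  have hpT : Function.Periodic (deriv γ) 1 := fun s => by
    rw [← deriv_comp_add_const]
    congr 1
    funext x; exact hper x
  have hβ : 1 + 2 * q * σ = α * q := by
    rw [hσ]; field_simp; ring
  rw [hβ] at hsob
  obtain ⟨c, hc, hcev⟩ := xclose hdγ hT hper hpT hspeed
  have hcev3 : ∀ᶠ n : ℕ in atTop, 3 ≤ n ∧ (∀ k : ℤ, xav γ n k + c n ≠ 0) ∧
      ∑ k ∈ Finset.range n, xun (xav γ n k + c n) = 0 :=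
    (eventually_ge_atTop 3).and hcev
  have hBex : ∀ n : ℕ, ∃ B : ℤ → EuclideanSpace ℝ (Fin d), (3 ≤ n → (∀ k, ‖B k‖ = 1) ∧
      (∀ k, B (k + n) = B k) ∧ ∑ k ∈ Finset.range n, B k = 0) ∧
      ((3 ≤ n ∧ (∀ k : ℤ, xav γ n k + c n ≠ 0) ∧
        ∑ k ∈ Finset.range n, xun (xav γ n k + c n) = 0) →
        ∀ k, B k = xun (xav γ n k + c n)) := by
    intro n
    by_cases h : (3 ≤ n ∧ (∀ k : ℤ, xav γ n k + c n ≠ 0) ∧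
        ∑ k ∈ Finset.range n, xun (xav γ n k + c n) = 0)
    · refine ⟨fun k => xun (xav γ n k + c n), fun _ => ⟨fun k => xun_norm (h.2.1 k), fun k => ?_, h.2.2⟩,
        fun _ _ => rfl⟩
      simp only [xav_per hper n (by omega) k]
    · by_cases h3 : 3 ≤ n
      · obtain ⟨B, hB⟩ := xregular d hd n h3
        exact ⟨B, fun _ => hB, fun h' => absurd h' h⟩
      · exact ⟨0, fun h' => absurd h' h3, fun h' => absurd h' h⟩
  choose B hB1 hB2 using hBex
  have hclose : ∀ ε > 0, ∀ᶠ n : ℕ in atTop, ∀ k : ℤ,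
      ∀ u ∈ Set.Icc ((k : ℝ) / n) (((k : ℝ) + 1) / n), ‖B n k - deriv γ u‖ ≤ ε := by
    intro ε hε
    filter_upwards [xBclose hdγ hT hpT hspeed c hc (hcev.mono fun n h => h.1) ε hε, hcev3] with n h1 h2 k
    rw [hB2 n h2 k]
    exact h1 k
  have haff : ∀ n : ℕ, 3 ≤ n → ∀ i : ℤ, ∀ u ∈ Set.Icc ((i:ℝ) / n) (((i:ℝ) + 1) / n),
      xpoly n (B n) (γ 0) u = xpoly n (B n) (γ 0) ((i:ℝ)/n) + (u - (i:ℝ)/n) • B n i :=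
    fun n hn i u hu => xpoly_affine n (by omega) (B n) (hB1 n hn).1 (γ 0) i u hu
  have hpper : ∀ n : ℕ, 3 ≤ n → Function.Periodic (xpoly n (B n) (γ 0)) 1 := fun n hn =>
    xpoly_periodic n (by omega) (B n) (hB1 n hn).1 (γ 0) (hB1 n hn).2.1 (hB1 n hn).2.2
  have hpc : ∀ ε > 0, ∀ᶠ n : ℕ in atTop, ∀ u, ‖xpoly n (B n) (γ 0) u - γ u‖ ≤ ε := by
    intro ε hε
    filter_upwards [hclose ε hε, eventually_ge_atTop 3] with n h1 h3 u
    exact xpoly_close hdγ hT hper n (by omega) (B n) (hB1 n h3).1 (hB1 n h3).2.1 (hB1 n h3).2.2 ε h1 u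
  refine ⟨fun n => xpoly n (B n) (γ 0), fun _ => 0, B, ?_, ?_, ?_⟩
  · intro n hn
    refine ⟨hpper n hn, fun i => ⟨(hB1 n hn).1 i, fun u hu => ?_⟩⟩
    simp only [zero_add] at hu ⊢
    exact haff n hn i u hu
  · intro ε hε
    obtain ⟨N, hN⟩ := eventually_atTop.1 ((hpc ε hε).and (hclose ε hε))
    refine ⟨N, fun n hn => ⟨(hN n hn).1, fun i u hu => ?_⟩⟩
    simp only [zero_add] at hu
    exact (hN n hn).2 i u hu
  · obtain ⟨c0, hc0, hbi⟩ := xbilip hdγ hT hper hpT hspeed hinj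
    have hcs : ∀ᶠ n : ℕ in atTop, ‖c n‖ < 1 / 2 := by
      have := hc.norm; rw [norm_zero] at this
      exact this.eventually_lt_const (by norm_num)
    have hdom : ∀ᶠ n : ℕ in atTop, ∀ x ∈ Set.Ioc (0:ℝ) 1, ∀ y ∈ Set.Ioc (0:ℝ) 1,
        0 ≤ xF (xpoly n (B n) (γ 0)) n α q ⌈(n:ℝ) * x⌉ ⌈(n:ℝ) * y⌉ ∧
        ENNReal.ofReal (xF (xpoly n (B n) (γ 0)) n α q ⌈(n:ℝ) * x⌉ ⌈(n:ℝ) * y⌉) ≤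
        ENNReal.ofReal ((((c0 / 2) ^ (-α) * max α 1) ^ q * 4 ^ (2 * q)) * (2 / 3) ^ (-(α * q) - 1)) *
        (xH (deriv γ) q (α * q) x (y + 0 - x) + xH (deriv γ) q (α * q) x (y + 1 - x) +
          xH (deriv γ) q (α * q) x (y + (-1) - x)) := by
      filter_upwards [hcs, hcev3, hclose (c0 / 2) (by positivity)] with n h1 h2 h3 x hx y hy
      exact xM2 hdγ hT hspeed n (by omega) _ (B n) (hpper n h2.1) (haff n h2.1) (c n) h1.le h2.2.1
        (hB2 n h2) (c0 / 2) (by positivity)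
        (fun a m hm => xlow hdγ n (by omega) _ (B n) (haff n h2.1) c0 hbi h3 a m hm) α q hα hq x y hx hy
    have hfinal := xenergy hC1.continuous hT hper hpT hinj (fun n => xpoly n (B n) (γ 0)) hpc α q hα hq hsob
      _ ENNReal.ofReal_ne_top hdom
    have hO : oharaE d α q 1 γ = (1 / α) * ∫ t in Set.Ioc (0 : ℝ) 1, ∫ s in Set.Ioc (0 : ℝ) 1,
        (‖γ t - γ s‖ ^ (-α) - iDist 1 s t ^ (-α)) ^ q := by
      unfold oharaE; rw [Real.one_rpow, mul_one]
    rw [hO]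
    simp only [zero_add]
    exact hfinal
end

section
/- Let (X, d_X) be a metric space, let Y be a subset of X, and let F_n, F : X → ℝ ∪ {±∞}. Assume: (1) for every x ∈ X and every sequence (x_n) in X with d_X(x_n, x) → 0, one has F(x) ≤ liminf_{n→∞} F_n(x_n); (2) for every y ∈ Y there exists a sequence (y_n) in X with d_X(y_n, y) → 0 and limsup_{n→∞} F_n(y_n) ≤ F(y). Let z_n, z ∈ X satisfy d_X(z_n, z) → 0 and suppose that F_n(z_n) and inf_X F_n are finite for all n and |F_n(z_n) − inf_X F_n| → 0. Then F(z) ≤ liminf_{n→∞} (inf_X F_n) ≤ inf_Y F. -/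
open Filter

theorem stmt16 {X : Type*} [MetricSpace X] (Y : Set X)
    (F : X → EReal) (Fn : ℕ → X → EReal)
    (h1 : ∀ (x : X) (xs : ℕ → X),
      Filter.Tendsto (fun n => dist (xs n) x) Filter.atTop (nhds 0) →
        F x ≤ Filter.liminf (fun n => Fn n (xs n)) Filter.atTop)
    (h2 : ∀ y ∈ Y, ∃ ys : ℕ → X,
      Filter.Tendsto (fun n => dist (ys n) y) Filter.atTop (nhds 0) ∧
        Filter.limsup (fun n => Fn n (ys n)) Filter.atTop ≤ F y)
    (z : X) (zs : ℕ → X)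
    (hz : Filter.Tendsto (fun n => dist (zs n) z) Filter.atTop (nhds 0))
    (hfin1 : ∀ n, Fn n (zs n) ≠ ⊤ ∧ Fn n (zs n) ≠ ⊥)
    (hfin2 : ∀ n, (⨅ x : X, Fn n x) ≠ ⊤ ∧ (⨅ x : X, Fn n x) ≠ ⊥)
    (happ : Filter.Tendsto
      (fun n => |(Fn n (zs n)).toReal - (⨅ x : X, Fn n x).toReal|)
      Filter.atTop (nhds 0)) :
    F z ≤ Filter.liminf (fun n => ⨅ x : X, Fn n x) Filter.atTop ∧
      Filter.liminf (fun n => ⨅ x : X, Fn n x) Filter.atTop ≤ ⨅ y ∈ Y, F y := by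
  constructor
  · refine (h1 z zs hz).trans ?_
    refine le_of_forall_lt_imp_le_of_dense fun c0 hc0 => ?_
    obtain ⟨c, hc, hcL⟩ := EReal.lt_iff_exists_real_btwn.1 hc0
    obtain ⟨d, hcd, hdL⟩ := EReal.lt_iff_exists_real_btwn.1 hcL
    have hcd' : c < d := by exact_mod_cast hcd
    have e1 := Filter.eventually_lt_of_lt_liminf hdL
    have e2 := happ.eventually (gt_mem_nhds (sub_pos.2 hcd'))
    refine hc.le.trans (Filter.le_liminf_of_le (by isBoundedDefault) ?_)
    filter_upwards [e1, e2] with n k1 k2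
    rw [← EReal.coe_toReal (hfin1 n).1 (hfin1 n).2] at k1
    rw [← EReal.coe_toReal (hfin2 n).1 (hfin2 n).2]
    have k1' : d < (Fn n (zs n)).toReal := by exact_mod_cast k1
    have k3 := (abs_lt.1 k2).2
    have : c ≤ (⨅ x : X, Fn n x).toReal := by linarith
    exact_mod_cast this
  · refine le_iInf₂ fun y hy => ?_
    obtain ⟨ys, -, hys⟩ := h2 y hy
    refine le_trans ?_ hys
    refine le_trans (Filter.liminf_le_limsup) ?_
    exact Filter.limsup_le_limsup (Filter.Eventually.of_forall fun n => iInf_le _ (ys n))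
end
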